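/- Let 1<p<∞ and let Ω ⊆ ℝ^N be an open set. Suppose there exists k ∈ ℕ\{0} such that λ_{k,p}^{LS}(Ω) < E_p(Ω). Then for every ℓ ∈ {1,…,k} the minmax value λ_{ℓ,p}^{LS}(Ω) is an eigenvalue of the Dirichlet p-Laplacian on Ω, i.e. there exists u ∈ W^{1,p}_0(Ω)\{0} such that ∫_Ω ⟨|∇u|^{p−2}∇u, ∇φ⟩ dx = λ_{ℓ,p}^{LS}(Ω) ∫_Ω |u|^{p−2} u φ dx for every φ ∈ C_c^∞(Ω). -/

import Mathlib

open MeasureTheory Filter Topology Metric Set ENNReal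
open scoped RealInnerProductSpace

noncomputable section

/-- Euclidean space `ℝ^N`. -/
abbrev EucN (N : ℕ) := EuclideanSpace ℝ (Fin N)

/-- A test function on an open set `Ω ⊆ ℝ^N`: smooth, with compact support contained in `Ω`. -/
def IsTestFun {N : ℕ} (Ω : Set (EucN N)) (φ : EucN N → ℝ) : Prop :=
  ContDiff ℝ (⊤ : ℕ∞) φ ∧ HasCompactSupport φ ∧ tsupport φ ⊆ Ω

/-- Pairs `(u, g)` in `L^q × L^q`, thought of as a function together with its (weak) gradient. -/
abbrev SobPair (N : ℕ) (q : ℝ≥0∞) :=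
  Lp ℝ q (volume : Measure (EucN N)) × Lp (EucN N) q (volume : Measure (EucN N))

/-- A pair given (a.e.) by a test function and its gradient. -/
def IsTestPair {N : ℕ} (q : ℝ≥0∞) (Ω : Set (EucN N)) (w : SobPair N q) : Prop :=
  ∃ ψ : EucN N → ℝ, IsTestFun Ω ψ ∧ (⇑w.1 =ᵐ[volume] ψ) ∧
    (⇑w.2 =ᵐ[volume] fun x => gradient ψ x)

theorem fact_one_le_ofReal {p : ℝ} (hp : 1 ≤ p) : Fact (1 ≤ ENNReal.ofReal p) :=
  ⟨ENNReal.one_le_ofReal.mpr hp⟩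

/-- The Sobolev space `W^{1,p}_0(Ω)`, realized as the closure in `L^p × L^p` of the set of
pairs (test function, its gradient). -/
def W10 (N : ℕ) (p : ℝ) (hp : 1 ≤ p) (Ω : Set (EucN N)) :
    Set (SobPair N (ENNReal.ofReal p)) :=
  letI := fact_one_le_ofReal hp
  closure {w | IsTestPair (ENNReal.ofReal p) Ω w}

/-- The first eigenvalue `λ_{1,p}(Ω)` (as an extended real, `∞` if there are no admissible
functions). -/
def lambda1p (N : ℕ) (p : ℝ) (hp : 1 ≤ p) (Ω : Set (EucN N)) : ℝ≥0∞ :=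
  sInf {t | ∃ w ∈ W10 N p hp Ω, (∫ x, |w.1 x| ^ p) = 1 ∧
    t = ENNReal.ofReal (∫ x, ‖w.2 x‖ ^ p)}

/-- The `L^p` Poincaré constant "at infinity" `E_p(Ω)`. -/
def Einfty (N : ℕ) (p : ℝ) (hp : 1 ≤ p) (Ω : Set (EucN N)) : ℝ≥0∞ :=
  ⨆ R ∈ Set.Ioi (0 : ℝ), lambda1p N p hp (Ω \ closure (ball (0 : EucN N) R))

/-- There is a continuous odd map from `A` to the unit sphere `S^{j-1} ⊆ ℝ^j`. -/
def HasOddMapToSphere {Z : Type*} [NormedAddCommGroup Z] (A : Set Z) (j : ℕ) : Prop :=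
  ∃ f : Z → EuclideanSpace ℝ (Fin j),
    ContinuousOn f A ∧ (∀ x ∈ A, ‖f x‖ = 1) ∧ ∀ x ∈ A, f (-x) = -f x

/-- The Krasnosel'skii genus of `A` is at least `k`. -/
def genusGE {Z : Type*} [NormedAddCommGroup Z] (A : Set Z) (k : ℕ) : Prop :=
  ∀ j : ℕ, HasOddMapToSphere A j → k ≤ j

/-- The Krasnosel'skii genus of `A`, valued in `ℕ∞`. -/
def genus {Z : Type*} [NormedAddCommGroup Z] (A : Set Z) : ℕ∞ :=
  sInf {k : ℕ∞ | ∃ j : ℕ, (j : ℕ∞) = k ∧ HasOddMapToSphere A j}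

/-- The class `𝒲_{k,p}(Ω)` of compact symmetric subsets of `S_p(Ω) ∩ W^{1,p}_0(Ω)` with
genus at least `k`. -/
def SobClass (N : ℕ) (p : ℝ) (hp : 1 ≤ p) (Ω : Set (EucN N)) (k : ℕ) :
    Set (Set (SobPair N (ENNReal.ofReal p))) :=
  letI := fact_one_le_ofReal hp
  {K | K ⊆ W10 N p hp Ω ∧ (∀ w ∈ K, (∫ x, |w.1 x| ^ p) = 1) ∧
       (∀ w ∈ K, -w ∈ K) ∧ IsCompact K ∧ genusGE K k}

/-- The `k`-th minmax Ljusternik–Schnirelmann value `λ_{k,p}^{LS}(Ω)`. -/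
def lambdaLS (N : ℕ) (p : ℝ) (hp : 1 ≤ p) (Ω : Set (EucN N)) (k : ℕ) : ℝ≥0∞ :=
  ⨅ K ∈ SobClass N p hp Ω k, ⨆ w ∈ K, ENNReal.ofReal (∫ x, ‖w.2 x‖ ^ p)

/-- `w = (u, ∇u)` is an eigenfunction of the Dirichlet `p`-Laplacian on `Ω` associated to the
eigenvalue `lam`. -/
def IsEigenfunction (N : ℕ) (p : ℝ) (hp : 1 ≤ p) (Ω : Set (EucN N)) (lam : ℝ)
    (w : SobPair N (ENNReal.ofReal p)) : Prop :=
  w ∈ W10 N p hp Ω ∧ w ≠ 0 ∧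
  ∀ φ : EucN N → ℝ, IsTestFun Ω φ →
    (∫ x, ‖w.2 x‖ ^ (p - 2) * ⟪w.2 x, gradient φ x⟫) =
      lam * ∫ x, |w.1 x| ^ (p - 2) * (w.1 x) * φ x

/-- `lam` is an eigenvalue of the Dirichlet `p`-Laplacian on `Ω`. -/
def IsEigenvalue (N : ℕ) (p : ℝ) (hp : 1 ≤ p) (Ω : Set (EucN N)) (lam : ℝ) : Prop :=
  ∃ w, IsEigenfunction N p hp Ω lam w

/-- `v = (v, ∇v)` is a non-negative weak subsolution of `-Δ_p u = lam · u^{p-1}` in `Ω`. -/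
def IsSubsolution (N : ℕ) (p : ℝ) (hp : 1 ≤ p) (Ω : Set (EucN N)) (lam : ℝ)
    (v : SobPair N (ENNReal.ofReal p)) : Prop :=
  v ∈ W10 N p hp Ω ∧ (∀ᵐ x, 0 ≤ v.1 x) ∧
  ∀ φ ∈ W10 N p hp Ω, (∀ᵐ x, 0 ≤ φ.1 x) →
    (∫ x, ‖v.2 x‖ ^ (p - 2) * ⟪v.2 x, φ.2 x⟫) ≤ lam * ∫ x, (v.1 x) ^ (p - 1) * φ.1 x

/-- A strongly confining potential. -/
def StronglyConfining (N : ℕ) (V : EucN N → ℝ) : Prop :=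
  LocallyIntegrable V volume ∧ (∀ᵐ x, 0 ≤ V x) ∧
  ∃ α : ℝ → ℝ, (∀ R > (0 : ℝ), 0 < α R) ∧ MonotoneOn α (Set.Ioi 0) ∧
    Tendsto α atTop atTop ∧
    ∀ R > (0 : ℝ), ∀ᵐ x, x ∉ ball (0 : EucN N) R → α R ≤ V x

/-- Triples `(u, g, h)` in `L^q × L^q × L^q`; `h` plays the role of `V^{1/p} u` in the weighted
Sobolev space. -/
abbrev SobTriple (N : ℕ) (q : ℝ≥0∞) :=
  Lp ℝ q (volume : Measure (EucN N)) × Lp (EucN N) q (volume : Measure (EucN N)) ×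
    Lp ℝ q (volume : Measure (EucN N))

/-- A triple given (a.e.) by a test function, its gradient, and `V^{1/p}` times it. -/
def IsTestTriple {N : ℕ} (q : ℝ≥0∞) (p : ℝ) (Ω : Set (EucN N)) (V : EucN N → ℝ)
    (w : SobTriple N q) : Prop :=
  ∃ ψ : EucN N → ℝ, IsTestFun Ω ψ ∧ (⇑w.1 =ᵐ[volume] ψ) ∧
    (⇑w.2.1 =ᵐ[volume] fun x => gradient ψ x) ∧
    (⇑w.2.2 =ᵐ[volume] fun x => (V x) ^ (1/p) * ψ x)

/-- The weighted Sobolev space `W^{1,p}_0(Ω; V)`, realized as a closure of triples coming from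
test functions; the norm topology of `L^p × L^p × L^p` on such triples corresponds exactly to
the weighted Sobolev norm `(∫|∇u|^p + ∫(1+V)|u|^p)^{1/p}`. -/
def W10V (N : ℕ) (p : ℝ) (hp : 1 ≤ p) (Ω : Set (EucN N)) (V : EucN N → ℝ) :
    Set (SobTriple N (ENNReal.ofReal p)) :=
  letI := fact_one_le_ofReal hp
  closure {w | IsTestTriple (ENNReal.ofReal p) p Ω V w}

/-- The class `𝒲_{k,p}(Ω; V)` for the weighted space. -/
def SobClassV (N : ℕ) (p : ℝ) (hp : 1 ≤ p) (Ω : Set (EucN N)) (V : EucN N → ℝ) (k : ℕ) :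
    Set (Set (SobTriple N (ENNReal.ofReal p))) :=
  letI := fact_one_le_ofReal hp
  {K | K ⊆ W10V N p hp Ω V ∧ (∀ w ∈ K, (∫ x, |w.1 x| ^ p) = 1) ∧
       (∀ w ∈ K, -w ∈ K) ∧ IsCompact K ∧ genusGE K k}

/-- The perturbed minmax value `λ_{k,p}^{LS}(Ω; ε V)`, for the functional
`G(φ) = ∫|∇φ|^p + ε ∫ V |φ|^p`. -/
def lambdaLSV (N : ℕ) (p : ℝ) (hp : 1 ≤ p) (Ω : Set (EucN N)) (V : EucN N → ℝ)
    (ε : ℝ) (k : ℕ) : ℝ≥0∞ :=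
  ⨅ K ∈ SobClassV N p hp Ω V k, ⨆ w ∈ K,
    ENNReal.ofReal ((∫ x, ‖w.2.1 x‖ ^ p) + ε * ∫ x, |w.2.2 x| ^ p)

/-- `w` is a constrained critical point, at level `lam`, of the perturbed functional
`G(φ) = ∫|∇φ|^p + ε ∫ V |φ|^p` on the unit sphere of `L^p`. -/
def IsCriticalV (N : ℕ) (p : ℝ) (hp : 1 ≤ p) (Ω : Set (EucN N)) (V : EucN N → ℝ)
    (ε : ℝ) (lam : ℝ) (w : SobTriple N (ENNReal.ofReal p)) : Prop :=
  w ∈ W10V N p hp Ω V ∧ (∫ x, |w.1 x| ^ p) = 1 ∧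
  ∀ φ : EucN N → ℝ, IsTestFun Ω φ →
    (∫ x, ‖w.2.1 x‖ ^ (p - 2) * ⟪w.2.1 x, gradient φ x⟫)
      + ε * ∫ x, V x * |w.1 x| ^ (p - 2) * (w.1 x) * φ x
    = lam * ∫ x, |w.1 x| ^ (p - 2) * (w.1 x) * φ x

/-- The embedding `W^{1,p}_0(Ω) ↪ L^p(Ω)` is compact: every bounded sequence in `W^{1,p}_0(Ω)`
has a subsequence converging strongly in `L^p`. -/
def CompactSobolevEmbedding (N : ℕ) (p : ℝ) (hp : 1 ≤ p) (Ω : Set (EucN N)) : Prop :=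
  ∀ w : ℕ → SobPair N (ENNReal.ofReal p), (∀ n, w n ∈ W10 N p hp Ω) →
    (∃ M : ℝ≥0∞, M ≠ ⊤ ∧ ∀ n, eLpNorm (⇑(w n).1) (ENNReal.ofReal p) volume ≤ M ∧
        eLpNorm (⇑(w n).2) (ENNReal.ofReal p) volume ≤ M) →
    ∃ σ : ℕ → ℕ, StrictMono σ ∧ ∃ u : EucN N → ℝ, MemLp u (ENNReal.ofReal p) volume ∧
      Tendsto (fun n => eLpNorm (⇑(w (σ n)).1 - u) (ENNReal.ofReal p) volume) atTop (𝓝 0)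

/-!
Inverse iteration takes the place of the deformation lemma. Write `λ` for the minmax value, norm
`W^{1,p}_0` by `‖w‖ ^ p = ‖w‖_p ^ p + ‖∇w‖_p ^ p` and let `β ^ p = λ + 1`. For `‖y‖_p = 1` let `L_y`
be the functional `∫ |y| ^ (p - 2) y ·` on `W^{1,p}_0` and `v_y` the unit vector at which it attains
its norm, so that `1 / ‖y‖ ≤ ‖L_y‖ ≤ ‖v_y‖_p`. By uniform convexity `y ↦ v_y / ‖v_y‖_p` is
continuous; it is odd and does not increase the norm, so it maps the minmax class to itself.
Applying it to almost optimal compact sets gives `y_n` with `‖y_n‖ → β` and `1 / ‖v_n‖_p ≥ β`,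
where `v_n` is the vector of `y_n`. These bounds force `‖L_{y_n}‖ → 1 / β`, hence, by uniform
convexity again, `v_n - y_n / ‖y_n‖ → 0`, and the Euler-Lagrange equation of `v_n` turns `(v_n)`
into a Palais-Smale sequence at level `λ`. Since `λ < E_p`, testing the equation with a cutoff near
infinity shows that no mass of `v_n` escapes; with the Rellich theorem on balls, `v_n`, and so
`y_n`, has a limit point in `L^p`. As `v_y` depends on `y` continuously in `L^p`, the `v_n` then
cluster in `W^{1,p}_0`, at an eigenfunction.
-/

section HomogeneousFunctions

theorem exists_le_const_mul_of_isCompact {X : Type*} [TopologicalSpace X] {K : Set X}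
    (hK : IsCompact K) {F G : X → ℝ} (hF : Continuous F) (hG : Continuous G) (hG0 : ∀ x, 0 ≤ G x)
    (hFG : ∀ x ∈ K, G x = 0 → F x < 0) : ∃ C, 0 ≤ C ∧ ∀ x ∈ K, F x ≤ C * G x := by
  obtain ⟨B, hB⟩ := hK.bddAbove_image hF.continuousOn
  have hFB : ∀ x ∈ K, F x ≤ |B| := fun x hx => (hB (mem_image_of_mem F hx)).trans (le_abs_self B)
  have hK' : IsCompact (K ∩ {x | 0 ≤ F x}) :=
    hK.inter_right (isClosed_le continuous_const hF)
  rcases (K ∩ {x | 0 ≤ F x}).eq_empty_or_nonempty with hempty | hne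
  · refine ⟨0, le_rfl, fun x hx => ?_⟩
    rw [zero_mul]
    by_contra! hpos
    exact hempty.subset ⟨hx, hpos.le⟩
  · obtain ⟨x₀, ⟨hx₀K, hx₀F⟩, hmin⟩ := hK'.exists_isMinOn hne hG.continuousOn
    have hGx₀ : 0 < G x₀ :=
      (hG0 x₀).lt_of_ne fun h => (hFG x₀ hx₀K h.symm).not_ge hx₀F
    refine ⟨|B| / G x₀, by positivity, fun x hx => ?_⟩
    rcases lt_or_ge (F x) 0 with hneg | hnonneg
    · exact hneg.le.trans (mul_nonneg (by positivity) (hG0 x))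
    · calc F x ≤ |B| := hFB x hx
        _ = |B| / G x₀ * G x₀ := (div_mul_cancel₀ _ hGx₀.ne').symm
        _ ≤ |B| / G x₀ * G x := by gcongr; exact hmin ⟨hx, hnonneg⟩

theorem exists_le_norm_rpow_add_of_homogeneous {V : Type*} [NormedAddCommGroup V]
    [NormedSpace ℝ V] [FiniteDimensional ℝ V] {p : ℝ} (hp : 0 < p) {F G : V → ℝ}
    (hF : Continuous F) (hG : Continuous G)
    (hFhom : ∀ t : ℝ, 0 < t → ∀ x, F (t • x) = t ^ p * F x)
    (hGhom : ∀ t : ℝ, 0 < t → ∀ x, G (t • x) = t ^ p * G x)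
    (hG0 : ∀ x, 0 ≤ G x) (hFG : ∀ x, G x = 0 → F x ≤ 0) {ε : ℝ} (hε : 0 < ε) :
    ∃ C, 0 ≤ C ∧ ∀ x, F x ≤ ε * ‖x‖ ^ p + C * G x := by
  obtain ⟨C, hC0, hC⟩ := exists_le_const_mul_of_isCompact (isCompact_sphere (0 : V) 1)
    (F := fun x => F x - ε) (hF.sub continuous_const) hG hG0
    fun x _ hx => by linarith [hFG x hx]
  refine ⟨C, hC0, fun x => ?_⟩
  rcases eq_or_ne x 0 with rfl | hx
  · have hG2 := hGhom 2 two_pos 0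
    have h2 : (1 : ℝ) < 2 ^ p := Real.one_lt_rpow one_lt_two hp
    have hG00 : G 0 = 0 := by rw [smul_zero] at hG2; nlinarith
    simpa [hG00, Real.zero_rpow hp.ne'] using hFG 0 hG00
  · have hpos : 0 < ‖x‖ := norm_pos_iff.2 hx
    have hunit := hC (‖x‖⁻¹ • x) (by simp [norm_smul, hpos.ne'])
    calc F x = ‖x‖ ^ p * F (‖x‖⁻¹ • x) := by rw [← hFhom _ hpos, smul_inv_smul₀ hpos.ne']
      _ ≤ ‖x‖ ^ p * (ε + C * G (‖x‖⁻¹ • x)) := by gcongr; linarith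
      _ = ε * ‖x‖ ^ p + C * (‖x‖ ^ p * G (‖x‖⁻¹ • x)) := by ring
      _ = ε * ‖x‖ ^ p + C * G x := by rw [← hGhom _ hpos, smul_inv_smul₀ hpos.ne']

theorem norm_smul_rpow_of_pos {E : Type*} [SeminormedAddCommGroup E] [NormedSpace ℝ E]
    (p : ℝ) {t : ℝ} (ht : 0 < t) (a : E) : ‖t • a‖ ^ p = t ^ p * ‖a‖ ^ p := by
  rw [norm_smul, Real.mul_rpow (norm_nonneg _) (norm_nonneg _), Real.norm_of_nonneg ht.le]

theorem norm_prodMk_rpow_le {X Y : Type*} [SeminormedAddCommGroup X] [SeminormedAddCommGroup Y]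
    (p : ℝ) (x : X) (y : Y) : ‖(x, y)‖ ^ p ≤ ‖x‖ ^ p + ‖y‖ ^ p := by
  have hx : 0 ≤ ‖x‖ ^ p := by positivity
  have hy : 0 ≤ ‖y‖ ^ p := by positivity
  rw [Prod.norm_mk]
  rcases max_choice ‖x‖ ‖y‖ with h | h <;> rw [h] <;> linarith

end HomogeneousFunctions

section Midpoint

variable {E : Type*} [NormedAddCommGroup E] [NormedSpace ℝ E] {p : ℝ}

theorem midpoint_rpow_le (hp : 1 ≤ p) {s t : ℝ} (hs : 0 ≤ s) (ht : 0 ≤ t) :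
    ((s + t) / 2) ^ p ≤ (s ^ p + t ^ p) / 2 := by
  have h := (convexOn_rpow hp).2 (mem_Ici.2 hs) (mem_Ici.2 ht)
    (by norm_num : (0 : ℝ) ≤ 1 / 2) (by norm_num : (0 : ℝ) ≤ 1 / 2) (by norm_num)
  simp only [smul_eq_mul] at h
  calc ((s + t) / 2) ^ p = (1 / 2 * s + 1 / 2 * t) ^ p := by ring_nf
    _ ≤ 1 / 2 * s ^ p + 1 / 2 * t ^ p := h
    _ = (s ^ p + t ^ p) / 2 := by ring

theorem norm_half_smul_add (a b : E) : ‖(1 / 2 : ℝ) • (a + b)‖ = ‖a + b‖ / 2 := by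
  rw [norm_smul, Real.norm_of_nonneg (by norm_num)]; ring

theorem norm_half_smul_add_rpow_le (hp : 1 ≤ p) (a b : E) :
    ‖(1 / 2 : ℝ) • (a + b)‖ ^ p ≤ (‖a‖ ^ p + ‖b‖ ^ p) / 2 := by
  rw [norm_half_smul_add]
  exact (Real.rpow_le_rpow (by positivity) (by gcongr; exact norm_add_le a b) (by linarith)).trans
    (midpoint_rpow_le hp (norm_nonneg a) (norm_nonneg b))

theorem eq_of_norm_half_smul_add_rpow_eq [StrictConvexSpace ℝ E] (hp : 1 < p) {a b : E}
    (h : ‖(1 / 2 : ℝ) • (a + b)‖ ^ p = (‖a‖ ^ p + ‖b‖ ^ p) / 2) : a = b := by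
  rw [norm_half_smul_add] at h
  have htriangle : (‖a + b‖ / 2) ^ p ≤ ((‖a‖ + ‖b‖) / 2) ^ p :=
    Real.rpow_le_rpow (by positivity) (by gcongr; exact norm_add_le a b) (by linarith)
  have hconvex := midpoint_rpow_le hp.le (norm_nonneg a) (norm_nonneg b)
  have hadd : ‖a + b‖ = ‖a‖ + ‖b‖ := by
    have := (Real.rpow_left_inj (by positivity) (by positivity) (by linarith : p ≠ 0)).1
      (htriangle.antisymm (by linarith))
    linarith
  refine (sameRay_iff_norm_add.2 hadd).eq_of_norm_eq ?_
  by_contra hne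
  have hstrict := (strictConvexOn_rpow hp).2 (mem_Ici.2 (norm_nonneg a))
    (mem_Ici.2 (norm_nonneg b)) hne (by norm_num : (0 : ℝ) < 1 / 2)
    (by norm_num : (0 : ℝ) < 1 / 2) (by norm_num)
  rw [smul_eq_mul, smul_eq_mul, ← mul_add, one_div_mul_eq_div] at hstrict
  simp only [smul_eq_mul] at hstrict
  linarith

end Midpoint

/-- Uniform convexity of the function `‖·‖ ^ p`: the distance of two vectors is controlled by the
convexity defect at their midpoint, up to an arbitrarily small error. Unlike uniform convexity of
the unit ball, this inequality can be integrated. -/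
def PowUniformConvex (p : ℝ) (X : Type*) [NormedAddCommGroup X] [NormedSpace ℝ X] : Prop :=
  ∀ ε : ℝ, 0 < ε → ∃ C : ℝ, 0 ≤ C ∧ ∀ a b : X, ‖a - b‖ ^ p ≤ ε * (‖a‖ ^ p + ‖b‖ ^ p) +
    C * ((‖a‖ ^ p + ‖b‖ ^ p) / 2 - ‖(1 / 2 : ℝ) • (a + b)‖ ^ p)

theorem powUniformConvex_of_finiteDimensional {E : Type*} [NormedAddCommGroup E]
    [NormedSpace ℝ E] [StrictConvexSpace ℝ E] [FiniteDimensional ℝ E] {p : ℝ} (hp : 1 < p) :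
    PowUniformConvex p E := by
  intro ε hε
  have hp0 : 0 < p := by linarith
  obtain ⟨C, hC, h⟩ := exists_le_norm_rpow_add_of_homogeneous (V := E × E) hp0
    (F := fun x => ‖x.1 - x.2‖ ^ p)
    (G := fun x => (‖x.1‖ ^ p + ‖x.2‖ ^ p) / 2 - ‖(1 / 2 : ℝ) • (x.1 + x.2)‖ ^ p)
    (by fun_prop (disch := simp [hp0.le])) (by fun_prop (disch := simp [hp0.le]))
    (fun t ht x => by
      simp only [Prod.smul_fst, Prod.smul_snd, ← smul_sub, norm_smul_rpow_of_pos p ht])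
    (fun t ht x => by
      simp only [Prod.smul_fst, Prod.smul_snd, ← smul_add, smul_comm (1 / 2 : ℝ) t,
        norm_smul_rpow_of_pos p ht]
      ring)
    (fun x => sub_nonneg.2 (norm_half_smul_add_rpow_le hp.le x.1 x.2))
    (fun x hx => by
      rw [eq_of_norm_half_smul_add_rpow_eq hp (sub_eq_zero.1 hx).symm]
      simp [Real.zero_rpow hp0.ne']) hε
  refine ⟨C, hC, fun a b => (h (a, b)).trans ?_⟩
  gcongr
  exact norm_prodMk_rpow_le p a b

theorem PowUniformConvex.uniformConvexSpace {X : Type*} [NormedAddCommGroup X] [NormedSpace ℝ X]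
    {p : ℝ} (hp : 1 ≤ p) (hX : PowUniformConvex p X) : UniformConvexSpace X := by
  refine ⟨fun ε hε => ?_⟩
  obtain ⟨C, hC, h⟩ := hX (ε ^ p / 4) (by positivity)
  have hp0 : 0 < p := by linarith
  set c := ε ^ p / (2 * (C + 1)) with hc
  refine ⟨2 * (c / p), by positivity, fun x hx y hy hxy => ?_⟩
  set s := ‖x + y‖ / 2 with hs
  have hs1 : s ≤ 1 := by linarith [norm_add_le x y]
  have hεp : ε ^ p ≤ ‖x - y‖ ^ p := Real.rpow_le_rpow hε.le hxy hp0.le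
  have hxy_defect := h x y
  rw [norm_half_smul_add, ← hs, hx, hy, Real.one_rpow] at hxy_defect
  have hsp1 : s ^ p ≤ 1 := Real.rpow_le_one (by positivity) hs1 hp0.le
  have hdefect : c ≤ 1 - s ^ p := by
    rw [hc, div_le_iff₀ (by positivity)]
    nlinarith
  have hbernoulli : 1 + p * (s - 1) ≤ s ^ p := by
    have h := one_add_mul_self_le_rpow_one_add (s := s - 1)
      (by linarith [norm_nonneg (x + y)]) hp
    rwa [add_sub_cancel] at h
  have hcs : c / p ≤ 1 - s := by rw [div_le_iff₀ hp0]; linarith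
  linarith

theorem uniformConvexSpace_submodule {X : Type*} [NormedAddCommGroup X] [NormedSpace ℝ X]
    [UniformConvexSpace X] (S : Submodule ℝ X) : UniformConvexSpace S :=
  ⟨fun _ hε =>
    let ⟨δ, hδ, h⟩ := exists_forall_sphere_dist_add_le_two_sub X hε
    ⟨δ, hδ, fun _ hx _ hy hxy => h hx hy hxy⟩⟩

section LpNorm

variable {α : Type*} [MeasurableSpace α] {μ : Measure α} {E : Type*} [NormedAddCommGroup E] {p : ℝ}

theorem integrable_norm_rpow_of_Lp (hp : 0 < p) (f : Lp E (ENNReal.ofReal p) μ) :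
    Integrable (fun x => ‖f x‖ ^ p) μ := by
  have h := (Lp.memLp f).integrable_norm_rpow (by simpa using hp) (by simp)
  rwa [ENNReal.toReal_ofReal hp.le] at h

theorem Lp_norm_rpow_eq_integral (hp : 0 < p) (f : Lp E (ENNReal.ofReal p) μ) :
    ‖f‖ ^ p = ∫ x, ‖f x‖ ^ p ∂μ := by
  have h := (Lp.memLp f).eLpNorm_eq_integral_rpow_norm (by simpa using hp) (by simp)
  rw [Lp.norm_def, h, ENNReal.toReal_ofReal (by positivity), ENNReal.toReal_ofReal hp.le,
    ← Real.rpow_mul (by positivity), inv_mul_cancel₀ hp.ne', Real.rpow_one]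

theorem integrable_norm_rpow_of_Lp_ae_eq (hp : 0 < p) {f : Lp E (ENNReal.ofReal p) μ} {g : α → E}
    (h : f =ᵐ[μ] g) : Integrable (fun x => ‖g x‖ ^ p) μ :=
  (integrable_norm_rpow_of_Lp hp f).congr (h.mono fun x hx => by simp only [hx])

theorem Lp_norm_rpow_eq_integral_of_ae_eq (hp : 0 < p) {f : Lp E (ENNReal.ofReal p) μ} {g : α → E}
    (h : f =ᵐ[μ] g) : ‖f‖ ^ p = ∫ x, ‖g x‖ ^ p ∂μ := by
  rw [Lp_norm_rpow_eq_integral hp]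
  exact integral_congr_ae (h.mono fun x hx => by simp only [hx])

theorem WithLp_prod_norm_rpow {X Y : Type*} [SeminormedAddCommGroup X] [SeminormedAddCommGroup Y]
    (hp : 0 < p) (f : WithLp (ENNReal.ofReal p) (X × Y)) : ‖f‖ ^ p = ‖f.fst‖ ^ p + ‖f.snd‖ ^ p := by
  rw [WithLp.prod_norm_eq_add (by rwa [ENNReal.toReal_ofReal hp.le]),
    ENNReal.toReal_ofReal hp.le, ← Real.rpow_mul (by positivity), one_div_mul_cancel hp.ne',
    Real.rpow_one]

end LpNorm

section PowUniformConvex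

variable {p : ℝ} [Fact (1 ≤ ENNReal.ofReal p)]

theorem PowUniformConvex.lp {α : Type*} [MeasurableSpace α] {μ : Measure α} {E : Type*}
    [NormedAddCommGroup E] [NormedSpace ℝ E] (hp : 0 < p) (hE : PowUniformConvex p E) :
    PowUniformConvex p (Lp E (ENNReal.ofReal p) μ) := by
  intro ε hε
  obtain ⟨C, hC, h⟩ := hE ε hε
  refine ⟨C, hC, fun a b => ?_⟩
  have hsub := Lp.coeFn_sub a b
  have hmid : ((1 / 2 : ℝ) • (a + b) : Lp E (ENNReal.ofReal p) μ) =ᵐ[μ]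
      fun x => (1 / 2 : ℝ) • (a x + b x) := by
    filter_upwards [Lp.coeFn_smul (1 / 2 : ℝ) (a + b), Lp.coeFn_add a b] with x h1 h2
    rw [h1, Pi.smul_apply, h2, Pi.add_apply]
  have ha := integrable_norm_rpow_of_Lp hp a
  have hb := integrable_norm_rpow_of_Lp hp b
  have hsum : Integrable (fun x => ‖a x‖ ^ p + ‖b x‖ ^ p) μ := ha.add hb
  have hmid_int := integrable_norm_rpow_of_Lp_ae_eq hp hmid
  have hdefect : Integrable (fun x => (‖a x‖ ^ p + ‖b x‖ ^ p) / 2 -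
      ‖(1 / 2 : ℝ) • (a x + b x)‖ ^ p) μ := (hsum.div_const 2).sub hmid_int
  rw [Lp_norm_rpow_eq_integral_of_ae_eq hp hmid, Lp_norm_rpow_eq_integral_of_ae_eq hp hsub,
    Lp_norm_rpow_eq_integral hp a, Lp_norm_rpow_eq_integral hp b, ← integral_add ha hb,
    ← integral_div, ← integral_sub (hsum.div_const 2) hmid_int, ← integral_const_mul,
    ← integral_const_mul, ← integral_add (hsum.const_mul ε) (hdefect.const_mul C)]
  exact integral_mono (integrable_norm_rpow_of_Lp_ae_eq hp hsub)
    ((hsum.const_mul ε).add (hdefect.const_mul C)) fun x => h (a x) (b x)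

theorem PowUniformConvex.withLp_prod {X Y : Type*} [NormedAddCommGroup X] [NormedSpace ℝ X]
    [NormedAddCommGroup Y] [NormedSpace ℝ Y] (hp : 1 ≤ p) (hX : PowUniformConvex p X)
    (hY : PowUniformConvex p Y) : PowUniformConvex p (WithLp (ENNReal.ofReal p) (X × Y)) := by
  intro ε hε
  have hp0 : 0 < p := by linarith
  obtain ⟨C, hC, h⟩ := hX ε hε
  obtain ⟨D, hD, k⟩ := hY ε hε
  refine ⟨C + D, by positivity, fun a b => ?_⟩
  simp only [WithLp_prod_norm_rpow hp0, WithLp.sub_fst, WithLp.sub_snd, WithLp.smul_fst,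
    WithLp.smul_snd, WithLp.add_fst, WithLp.add_snd]
  have hfst := mul_nonneg hD (sub_nonneg.2 (norm_half_smul_add_rpow_le hp a.fst b.fst))
  have hsnd := mul_nonneg hC (sub_nonneg.2 (norm_half_smul_add_rpow_le hp a.snd b.snd))
  linarith [h a.fst b.fst, k a.snd b.snd]

end PowUniformConvex

section NormingVector

variable {Y : Type*} [NormedAddCommGroup Y] [NormedSpace ℝ Y]

theorem tendsto_sub_zero_of_tendsto_norm_add_two [UniformConvexSpace Y] {ι : Type*} {l : Filter ι}
    {a b : ι → Y} (ha : ∀ i, ‖a i‖ ≤ 1) (hb : ∀ i, ‖b i‖ ≤ 1)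
    (hab : Tendsto (fun i => ‖a i + b i‖) l (𝓝 2)) : Tendsto (fun i => a i - b i) l (𝓝 0) := by
  rw [tendsto_zero_iff_norm_tendsto_zero, Metric.tendsto_nhds]
  intro ε hε
  obtain ⟨δ, hδ, h⟩ := exists_forall_closed_ball_dist_add_le_two_sub Y hε
  filter_upwards [hab.eventually_const_lt (by linarith : 2 - δ < 2)] with i hi
  rw [Real.dist_0_eq_abs, abs_norm]
  by_contra! hfar
  exact (h (ha i) (hb i) hfar).not_gt hi

theorem tendsto_sub_zero_of_tendsto_apply [UniformConvexSpace Y] {ι : Type*} {l : Filter ι}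
    {a b : ι → Y} {L : ι → StrongDual ℝ Y} {m : ℝ} (hm : 0 < m) (ha : ∀ i, ‖a i‖ ≤ 1)
    (hb : ∀ i, ‖b i‖ ≤ 1) (hL : Tendsto (fun i => ‖L i‖) l (𝓝 m))
    (hLa : Tendsto (fun i => L i (a i)) l (𝓝 m)) (hLb : Tendsto (fun i => L i (b i)) l (𝓝 m)) :
    Tendsto (fun i => a i - b i) l (𝓝 0) := by
  refine tendsto_sub_zero_of_tendsto_norm_add_two ha hb ?_
  have hlower : Tendsto (fun i => (L i (a i) + L i (b i)) / ‖L i‖) l (𝓝 2) := by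
    have h := (hLa.add hLb).div hL hm.ne'
    rwa [← two_mul, mul_div_cancel_right₀ _ hm.ne'] at h
  refine tendsto_of_tendsto_of_tendsto_of_le_of_le' hlower tendsto_const_nhds ?_
    (Eventually.of_forall fun i => by linarith [norm_add_le (a i) (b i), ha i, hb i])
  filter_upwards [hL.eventually_const_lt hm] with i hi
  rw [div_le_iff₀' hi, ← map_add]
  exact (le_abs_self _).trans ((L i).le_opNorm _)

theorem exists_norm_le_one_lt_apply (L : StrongDual ℝ Y) {r : ℝ} (hr : r < ‖L‖) :
    ∃ v, ‖v‖ ≤ 1 ∧ r < L v := by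
  obtain ⟨v, hv, hrv⟩ := L.exists_lt_apply_of_lt_opNorm hr
  rcases abs_choice (L v) with h | h
  · exact ⟨v, hv.le, by rwa [Real.norm_eq_abs, h] at hrv⟩
  · exact ⟨-v, by rw [norm_neg]; exact hv.le, by rwa [Real.norm_eq_abs, h, ← map_neg] at hrv⟩

theorem apply_le_norm_of_norm_le_one (L : StrongDual ℝ Y) {v : Y} (hv : ‖v‖ ≤ 1) : L v ≤ ‖L‖ :=
  (le_abs_self _).trans (L.unit_le_opNorm v hv)

variable [UniformConvexSpace Y] [CompleteSpace Y]

theorem exists_norm_le_one_apply_eq_norm (L : StrongDual ℝ Y) : ∃ v, ‖v‖ ≤ 1 ∧ L v = ‖L‖ := by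
  rcases eq_or_ne L 0 with rfl | hL
  · exact ⟨0, by simp⟩
  choose a ha hLa using fun n : ℕ =>
    exists_norm_le_one_lt_apply L (sub_lt_self ‖L‖ (Nat.one_div_pos_of_nat (n := n)))
  have hlim : Tendsto (fun n => L (a n)) atTop (𝓝 ‖L‖) :=
    tendsto_of_tendsto_of_tendsto_of_le_of_le
      (by simpa using tendsto_one_div_add_atTop_nhds_zero_nat.const_sub ‖L‖)
      tendsto_const_nhds (fun n => (hLa n).le) fun n => apply_le_norm_of_norm_le_one L (ha n)
  have hcauchy : CauchySeq a := by
    rw [cauchySeq_iff_tendsto, uniformity_eq_comap_nhds_zero, tendsto_comap_iff,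
      ← prod_atTop_atTop_eq]
    exact tendsto_sub_zero_of_tendsto_apply (a := fun i : ℕ × ℕ => a i.2) (L := fun _ => L)
      (norm_pos_iff.2 hL) (fun _ => ha _) (fun _ => ha _) tendsto_const_nhds
      (hlim.comp tendsto_snd) (hlim.comp tendsto_fst)
  obtain ⟨v, hv⟩ := cauchySeq_tendsto_of_complete hcauchy
  exact ⟨v, le_of_tendsto hv.norm (Eventually.of_forall ha),
    tendsto_nhds_unique ((L.continuous.tendsto v).comp hv) hlim⟩

/-- A vector of the unit ball at which the functional `L` attains its norm. In a uniformly convex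
Banach space it exists, and it is unique if `L ≠ 0`. -/
def normingVector (L : StrongDual ℝ Y) : Y :=
  (exists_norm_le_one_apply_eq_norm L).choose

theorem norm_normingVector_le_one (L : StrongDual ℝ Y) : ‖normingVector L‖ ≤ 1 :=
  (exists_norm_le_one_apply_eq_norm L).choose_spec.1

theorem apply_normingVector (L : StrongDual ℝ Y) : L (normingVector L) = ‖L‖ :=
  (exists_norm_le_one_apply_eq_norm L).choose_spec.2

theorem norm_normingVector {L : StrongDual ℝ Y} (hL : L ≠ 0) : ‖normingVector L‖ = 1 := by
  refine (norm_normingVector_le_one L).antisymm (le_of_mul_le_mul_left ?_ (norm_pos_iff.2 hL))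
  calc ‖L‖ * 1 = ‖L (normingVector L)‖ := by rw [apply_normingVector, norm_norm, mul_one]
    _ ≤ ‖L‖ * ‖normingVector L‖ := L.le_opNorm _

theorem eq_normingVector {L : StrongDual ℝ Y} (hL : L ≠ 0) {v : Y} (hv : ‖v‖ ≤ 1)
    (hLv : L v = ‖L‖) : v = normingVector L := by
  have h := tendsto_sub_zero_of_tendsto_apply (l := (⊤ : Filter Unit)) (a := fun _ => v)
    (b := fun _ => normingVector L) (L := fun _ => L) (norm_pos_iff.2 hL) (fun _ => hv)
    (fun _ => norm_normingVector_le_one L) tendsto_const_nhds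
    (hLv ▸ tendsto_const_nhds) (by simp only [apply_normingVector]; exact tendsto_const_nhds)
  exact sub_eq_zero.1 (tendsto_nhds_unique tendsto_const_nhds h)

theorem normingVector_neg {L : StrongDual ℝ Y} (hL : L ≠ 0) :
    normingVector (-L) = -normingVector L :=
  (eq_normingVector (neg_ne_zero.2 hL) (by rw [norm_neg]; exact norm_normingVector_le_one L)
    (by simp [apply_normingVector])).symm

theorem continuousAt_normingVector {L : StrongDual ℝ Y} (hL : L ≠ 0) :
    ContinuousAt normingVector L := by
  rw [ContinuousAt, ← tendsto_sub_nhds_zero_iff]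
  refine tendsto_sub_zero_of_tendsto_apply (L := id) (norm_pos_iff.2 hL)
    norm_normingVector_le_one (fun _ => norm_normingVector_le_one L) tendsto_norm ?_ ?_
  · simp only [id, apply_normingVector]
    exact tendsto_norm
  · rw [← apply_normingVector L]
    exact (ContinuousLinearMap.apply ℝ ℝ (normingVector L)).continuous.tendsto L

end NormingVector

theorem apply_eq_of_hasDerivAt_norm_rpow {Y : Type*} [NormedAddCommGroup Y] [NormedSpace ℝ Y]
    {p : ℝ} (hp : 1 ≤ p) {L : StrongDual ℝ Y} {v φ : Y} {d : ℝ} (hv : ‖v‖ = 1) (hLv : L v = ‖L‖)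
    (hd : HasDerivAt (fun t : ℝ => ‖v + t • φ‖ ^ p) (p * d) 0) : L φ = ‖L‖ * d := by
  have hmin : ∀ t : ℝ, ‖L‖ ≤ ‖L‖ * ‖v + t • φ‖ ^ p - t * (p * L φ) := fun t => by
    have hbernoulli := one_add_mul_self_le_rpow_one_add
      (by linarith [norm_nonneg (v + t • φ)] : -1 ≤ ‖v + t • φ‖ - 1) hp
    rw [add_sub_cancel] at hbernoulli
    have hLt : ‖L‖ + t * L φ ≤ ‖L‖ * ‖v + t • φ‖ := by
      rw [← hLv, ← smul_eq_mul, ← map_smul, ← map_add, hLv]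
      exact (le_abs_self _).trans (L.le_opNorm _)
    nlinarith [mul_le_mul_of_nonneg_left hbernoulli (norm_nonneg L)]
  have hderiv : HasDerivAt (fun t : ℝ => ‖L‖ * ‖v + t • φ‖ ^ p - t * (p * L φ))
      (‖L‖ * (p * d) - 1 * (p * L φ)) 0 := (hd.const_mul ‖L‖).sub ((hasDerivAt_id 0).mul_const _)
  have hlocal : IsLocalMin (fun t : ℝ => ‖L‖ * ‖v + t • φ‖ ^ p - t * (p * L φ)) 0 :=
    Eventually.of_forall fun t => by simpa [hv] using hmin t
  have hzero := hlocal.hasDerivAt_eq_zero hderiv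
  refine mul_left_cancel₀ (by linarith : p ≠ 0) ?_
  linarith

section DualityMap

variable {E : Type*} [NormedAddCommGroup E] {p : ℝ}

section NormedSpace

variable [NormedSpace ℝ E]

/-- The duality map `a ↦ ‖a‖ ^ (p - 2) • a`; in an inner product space it is the gradient of
`‖·‖ ^ p / p`. -/
def dualityMap (p : ℝ) (a : E) : E :=
  ‖a‖ ^ (p - 2) • a

theorem dualityMap_neg (a : E) : dualityMap p (-a) = -dualityMap p a := by
  simp only [dualityMap, norm_neg, smul_neg]

theorem norm_dualityMap (hp : p ≠ 1) (a : E) : ‖dualityMap p a‖ = ‖a‖ ^ (p - 1) := by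
  rw [dualityMap, norm_smul, Real.norm_of_nonneg (by positivity)]
  rcases eq_or_ne a 0 with rfl | ha
  · simp [Real.zero_rpow (sub_ne_zero.2 hp)]
  · rw [← Real.rpow_add_one (norm_ne_zero_iff.2 ha)]
    ring_nf

theorem dualityMap_smul_of_pos {t : ℝ} (ht : 0 < t) (a : E) :
    dualityMap p (t • a) = t ^ (p - 1) • dualityMap p a := by
  rw [dualityMap, dualityMap, norm_smul_rpow_of_pos _ ht, smul_smul, smul_smul,
    show p - 1 = p - 2 + 1 by ring, Real.rpow_add_one ht.ne']
  ring_nf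

theorem continuous_dualityMap (hp : 1 < p) : Continuous (dualityMap p : E → E) := by
  refine continuous_iff_continuousAt.2 fun a => ?_
  rcases eq_or_ne a 0 with rfl | ha
  · have hpow : Continuous fun a : E => ‖a‖ ^ (p - 1) :=
      continuous_norm.rpow_const fun _ => Or.inr (by linarith)
    rw [ContinuousAt, dualityMap, smul_zero, tendsto_zero_iff_norm_tendsto_zero]
    simpa [norm_dualityMap hp.ne', Real.zero_rpow (by linarith : p - 1 ≠ 0)] using hpow.tendsto 0
  · exact (continuous_norm.continuousAt.rpow_const (Or.inl (norm_ne_zero_iff.2 ha))).smul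
      continuousAt_id

theorem rpow_sub_one_rpow_conjExponent (hp : 1 < p) {s : ℝ} (hs : 0 ≤ s) :
    (s ^ (p - 1)) ^ Real.conjExponent p = s ^ p := by
  rw [← Real.rpow_mul hs, Real.conjExponent, mul_div_cancel₀ _ (by linarith)]

theorem exists_norm_dualityMap_sub_rpow_le [FiniteDimensional ℝ E] (hp : 1 < p) {ε : ℝ}
    (hε : 0 < ε) : ∃ C : ℝ, ∀ a b : E,
      ‖dualityMap p a - dualityMap p b‖ ^ Real.conjExponent p ≤
        ε * (‖a‖ ^ p + ‖b‖ ^ p) + C * ‖a - b‖ ^ p := by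
  have hp0 : 0 < p := by linarith
  have hq : 0 < Real.conjExponent p := (Real.HolderConjugate.conjExponent hp).symm.pos
  have hcont := continuous_dualityMap (E := E) hp
  obtain ⟨C, -, h⟩ := exists_le_norm_rpow_add_of_homogeneous (V := E × E) hp0
    (F := fun x => ‖dualityMap p x.1 - dualityMap p x.2‖ ^ Real.conjExponent p)
    (G := fun x => ‖x.1 - x.2‖ ^ p)
    (by fun_prop (disch := simp [hq.le])) (by fun_prop (disch := simp [hp0.le]))
    (fun t ht x => by
      simp only [Prod.smul_fst, Prod.smul_snd, dualityMap_smul_of_pos ht, ← smul_sub,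
        norm_smul_rpow_of_pos _ (Real.rpow_pos_of_pos ht _),
        rpow_sub_one_rpow_conjExponent hp ht.le])
    (fun t ht x => by
      simp only [Prod.smul_fst, Prod.smul_snd, ← smul_sub, norm_smul_rpow_of_pos p ht])
    (fun x => by positivity)
    (fun x hx => by
      have hx' := (Real.rpow_eq_zero (norm_nonneg _) hp0.ne').1 hx
      simp [norm_sub_eq_zero_iff.1 hx', Real.zero_rpow hq.ne']) hε
  refine ⟨C, fun a b => (h (a, b)).trans ?_⟩
  gcongr
  exact norm_prodMk_rpow_le p a b

end NormedSpace

variable [InnerProductSpace ℝ E]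

theorem inner_dualityMap_left (a c : E) : ⟪dualityMap p a, c⟫ = ‖a‖ ^ (p - 2) * ⟪a, c⟫ :=
  real_inner_smul_left _ _ _

theorem inner_dualityMap_self (hp : p ≠ 0) (a : E) : ⟪dualityMap p a, a⟫ = ‖a‖ ^ p := by
  rw [inner_dualityMap_left, real_inner_self_eq_norm_sq]
  rcases eq_or_ne a 0 with rfl | ha
  · simp [Real.zero_rpow hp]
  · rw [← Real.rpow_natCast, ← Real.rpow_add (norm_pos_iff.2 ha)]
    norm_num

theorem abs_inner_dualityMap_le (hp : p ≠ 1) (a c : E) :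
    |⟪dualityMap p a, c⟫| ≤ ‖a‖ ^ (p - 1) * ‖c‖ := by
  rw [← norm_dualityMap hp]
  exact abs_real_inner_le_norm _ _

theorem hasDerivAt_norm_add_smul_rpow (hp : 1 < p) (a b : E) (t : ℝ) :
    HasDerivAt (fun t : ℝ => ‖a + t • b‖ ^ p) (p * ⟪dualityMap p (a + t • b), b⟫) t := by
  have hline : HasDerivAt (fun t : ℝ => a + t • b) b t := by
    simpa using ((hasDerivAt_id t).smul_const b).const_add a
  refine ((hasFDerivAt_norm_rpow (a + t • b) hp).comp_hasDerivAt t hline).congr_deriv ?_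
  rw [smul_apply, innerSL_apply_apply, smul_eq_mul, inner_dualityMap_left, mul_assoc]

theorem abs_inner_dualityMap_add_smul_le (hp : 1 < p) (a b : E) {t : ℝ} (ht : |t| ≤ 1) :
    |⟪dualityMap p (a + t • b), b⟫| ≤ (‖a‖ + ‖b‖) ^ p := by
  have hadd : ‖a + t • b‖ ≤ ‖a‖ + ‖b‖ := by
    refine (norm_add_le _ _).trans (add_le_add_right ?_ _)
    rw [norm_smul, Real.norm_eq_abs]
    exact mul_le_of_le_one_left (norm_nonneg b) ht
  calc |⟪dualityMap p (a + t • b), b⟫|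
      ≤ ‖a + t • b‖ ^ (p - 1) * ‖b‖ := abs_inner_dualityMap_le hp.ne' _ _
    _ ≤ (‖a‖ + ‖b‖) ^ (p - 1) * (‖a‖ + ‖b‖) := by
        gcongr
        exact le_add_of_nonneg_left (norm_nonneg a)
    _ = (‖a‖ + ‖b‖) ^ p := by
        rw [← Real.rpow_add_one' (by positivity) (by linarith), sub_add_cancel]

end DualityMap

theorem fact_one_le_ofReal_conjExponent {p : ℝ} (hp : 1 < p) :
    Fact (1 ≤ ENNReal.ofReal (Real.conjExponent p)) :=
  fact_one_le_ofReal (Real.HolderConjugate.conjExponent hp).symm.lt.le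

section LpDuality

variable {α : Type*} [MeasurableSpace α] {μ : Measure α} {E : Type*} [NormedAddCommGroup E] {p : ℝ}

section NormedSpace

variable [NormedSpace ℝ E]

theorem memLp_dualityMap (hp : 1 < p) (f : Lp E (ENNReal.ofReal p) μ) :
    MemLp (fun x => dualityMap p (f x)) (ENNReal.ofReal (Real.conjExponent p)) μ := by
  have hq : 0 < Real.conjExponent p := (Real.HolderConjugate.conjExponent hp).symm.pos
  refine (integrable_norm_rpow_iff ((continuous_dualityMap hp).comp_aestronglyMeasurable
    (Lp.aestronglyMeasurable f)) (by simpa using hq) (by simp)).1 ?_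
  simp only [ENNReal.toReal_ofReal hq.le, norm_dualityMap hp.ne',
    rpow_sub_one_rpow_conjExponent hp (norm_nonneg _)]
  exact integrable_norm_rpow_of_Lp (by linarith) f

/-- The duality map from `L^p` to `L^q`, with `q` the conjugate exponent, acting pointwise. -/
def LpDualityMap (hp : 1 < p) (f : Lp E (ENNReal.ofReal p) μ) :
    Lp E (ENNReal.ofReal (Real.conjExponent p)) μ :=
  (memLp_dualityMap hp f).toLp _

theorem coeFn_LpDualityMap (hp : 1 < p) (f : Lp E (ENNReal.ofReal p) μ) :
    LpDualityMap hp f =ᵐ[μ] fun x => dualityMap p (f x) :=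
  MemLp.coeFn_toLp _

theorem LpDualityMap_neg (hp : 1 < p) (f : Lp E (ENNReal.ofReal p) μ) :
    LpDualityMap hp (-f) = -LpDualityMap hp f := by
  refine Lp.ext ?_
  filter_upwards [coeFn_LpDualityMap hp f, coeFn_LpDualityMap hp (-f), Lp.coeFn_neg f,
    Lp.coeFn_neg (LpDualityMap hp f)] with x h1 h2 h3 h4
  rw [h2, h3, h4, Pi.neg_apply, Pi.neg_apply, h1, dualityMap_neg]

theorem LpDualityMap_smul_of_pos (hp : 1 < p) {t : ℝ} (ht : 0 < t)
    (f : Lp E (ENNReal.ofReal p) μ) :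
    LpDualityMap hp (t • f) = t ^ (p - 1) • LpDualityMap hp f := by
  refine Lp.ext ?_
  filter_upwards [coeFn_LpDualityMap hp f, coeFn_LpDualityMap hp (t • f), Lp.coeFn_smul t f,
    Lp.coeFn_smul (t ^ (p - 1)) (LpDualityMap hp f)] with x h1 h2 h3 h4
  rw [h2, h3, h4, Pi.smul_apply, Pi.smul_apply, h1, dualityMap_smul_of_pos ht]

theorem norm_LpDualityMap (hp : 1 < p) (f : Lp E (ENNReal.ofReal p) μ) :
    ‖LpDualityMap hp f‖ = ‖f‖ ^ (p - 1) := by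
  have := fact_one_le_ofReal hp.le
  have := fact_one_le_ofReal_conjExponent hp
  have hq : 0 < Real.conjExponent p := (Real.HolderConjugate.conjExponent hp).symm.pos
  refine (Real.rpow_left_inj (norm_nonneg _) (by positivity) hq.ne').1 ?_
  rw [Lp_norm_rpow_eq_integral_of_ae_eq hq (coeFn_LpDualityMap hp f),
    rpow_sub_one_rpow_conjExponent hp (norm_nonneg f),
    Lp_norm_rpow_eq_integral (by linarith : 0 < p)]
  exact integral_congr_ae (ae_of_all _ fun x => by
    simp only [norm_dualityMap hp.ne', rpow_sub_one_rpow_conjExponent hp (norm_nonneg (f x))])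

theorem exists_norm_LpDualityMap_sub_rpow_le [FiniteDimensional ℝ E] (hp : 1 < p) {ε : ℝ}
    (hε : 0 < ε) : ∃ C : ℝ, ∀ a b : Lp E (ENNReal.ofReal p) μ,
      ‖LpDualityMap hp a - LpDualityMap hp b‖ ^ Real.conjExponent p ≤
        ε * (‖a‖ ^ p + ‖b‖ ^ p) + C * ‖a - b‖ ^ p := by
  have hp0 : 0 < p := by linarith
  have hq : 0 < Real.conjExponent p := (Real.HolderConjugate.conjExponent hp).symm.pos
  obtain ⟨C, h⟩ := exists_norm_dualityMap_sub_rpow_le (E := E) hp hε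
  refine ⟨C, fun a b => ?_⟩
  have hdual : LpDualityMap hp a - LpDualityMap hp b =ᵐ[μ]
      fun x => dualityMap p (a x) - dualityMap p (b x) := by
    filter_upwards [Lp.coeFn_sub (LpDualityMap hp a) (LpDualityMap hp b),
      coeFn_LpDualityMap hp a, coeFn_LpDualityMap hp b] with x h1 h2 h3
    rw [h1, Pi.sub_apply, h2, h3]
  have hsub := Lp.coeFn_sub a b
  have hsum : Integrable (fun x => ‖a x‖ ^ p + ‖b x‖ ^ p) μ :=
    (integrable_norm_rpow_of_Lp hp0 a).add (integrable_norm_rpow_of_Lp hp0 b)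
  have hsub_int := integrable_norm_rpow_of_Lp_ae_eq hp0 hsub
  rw [Lp_norm_rpow_eq_integral_of_ae_eq hq hdual, Lp_norm_rpow_eq_integral_of_ae_eq hp0 hsub,
    Lp_norm_rpow_eq_integral hp0 a, Lp_norm_rpow_eq_integral hp0 b,
    ← integral_add (integrable_norm_rpow_of_Lp hp0 a) (integrable_norm_rpow_of_Lp hp0 b),
    ← integral_const_mul, ← integral_const_mul,
    ← integral_add (hsum.const_mul ε) (hsub_int.const_mul C)]
  exact integral_mono (integrable_norm_rpow_of_Lp_ae_eq hq hdual)
    ((hsum.const_mul ε).add (hsub_int.const_mul C)) fun x => h (a x) (b x)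

theorem tendsto_LpDualityMap_sub [FiniteDimensional ℝ E] [Fact (1 ≤ ENNReal.ofReal p)] (hp : 1 < p)
    {ι : Type*} {l : Filter ι} {a b : ι → Lp E (ENNReal.ofReal p) μ} {M : ℝ}
    (ha : ∀ᶠ i in l, ‖a i‖ ≤ M) (hb : ∀ᶠ i in l, ‖b i‖ ≤ M)
    (hab : Tendsto (fun i => a i - b i) l (𝓝 0)) :
    Tendsto (fun i => ‖LpDualityMap hp (a i) - LpDualityMap hp (b i)‖) l (𝓝 0) := by
  have := fact_one_le_ofReal_conjExponent hp
  have hp0 : 0 < p := by linarith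
  have hq : 0 < Real.conjExponent p := (Real.HolderConjugate.conjExponent hp).symm.pos
  rw [Metric.tendsto_nhds]
  intro δ hδ
  set η := δ ^ Real.conjExponent p / (2 * (2 * |M| ^ p + 1)) with hη
  have hη0 : 0 < η := by positivity
  obtain ⟨C, h⟩ := exists_norm_LpDualityMap_sub_rpow_le (μ := μ) (E := E) hp hη0
  have hlim : Tendsto (fun i => C * ‖a i - b i‖ ^ p) l (𝓝 0) := by
    simpa [Real.zero_rpow hp0.ne'] using
      ((hab.norm.rpow_const (p := p) (Or.inr hp0.le)).const_mul C)
  filter_upwards [hlim.eventually_lt_const (by positivity : 0 < δ ^ Real.conjExponent p / 2),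
    ha, hb] with i hi hai hbi
  replace hai : ‖a i‖ ^ p ≤ |M| ^ p :=
    Real.rpow_le_rpow (norm_nonneg _) (hai.trans (le_abs_self M)) hp0.le
  replace hbi : ‖b i‖ ^ p ≤ |M| ^ p :=
    Real.rpow_le_rpow (norm_nonneg _) (hbi.trans (le_abs_self M)) hp0.le
  have hsmall : η * (‖a i‖ ^ p + ‖b i‖ ^ p) ≤ δ ^ Real.conjExponent p / 2 := by
    calc η * (‖a i‖ ^ p + ‖b i‖ ^ p) ≤ η * (2 * |M| ^ p + 1) :=
          mul_le_mul_of_nonneg_left (by linarith) hη0.le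
      _ = δ ^ Real.conjExponent p / 2 := by rw [hη]; field_simp
  rw [Real.dist_0_eq_abs, abs_norm]
  exact (Real.rpow_lt_rpow_iff (norm_nonneg _) hδ.le hq).1 (by linarith [h (a i) (b i)])

end NormedSpace

variable [InnerProductSpace ℝ E] [Fact (1 ≤ ENNReal.ofReal p)]

/-- The functional `g ↦ ∫ ‖f‖ ^ (p - 2) ⟪f, g⟫` on `L^p`, the derivative of `‖·‖ ^ p / p` at `f`. -/
def LpDuality (hp : 1 < p) (f : Lp E (ENNReal.ofReal p) μ) :
    StrongDual ℝ (Lp E (ENNReal.ofReal p) μ) :=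
  haveI := fact_one_le_ofReal_conjExponent hp
  haveI := (Real.HolderConjugate.conjExponent hp).symm.ennrealOfReal
  (innerSL ℝ).lpPairing μ _ _ (LpDualityMap hp f)

theorem LpDuality_apply (hp : 1 < p) (f g : Lp E (ENNReal.ofReal p) μ) :
    LpDuality hp f g = ∫ x, ⟪dualityMap p (f x), g x⟫ ∂μ := by
  have := fact_one_le_ofReal_conjExponent hp
  have := (Real.HolderConjugate.conjExponent hp).symm.ennrealOfReal
  rw [LpDuality, ContinuousLinearMap.lpPairing_eq_integral]
  refine integral_congr_ae ((coeFn_LpDualityMap hp f).mono fun x hx => ?_)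
  simp only [hx]
  exact innerSL_apply_apply ℝ _ _

theorem LpDuality_self (hp : 1 < p) (f : Lp E (ENNReal.ofReal p) μ) :
    LpDuality hp f f = ‖f‖ ^ p := by
  simp only [LpDuality_apply, inner_dualityMap_self (by linarith : p ≠ 0),
    Lp_norm_rpow_eq_integral (by linarith : 0 < p)]

theorem LpDuality_neg (hp : 1 < p) (f : Lp E (ENNReal.ofReal p) μ) :
    LpDuality hp (-f) = -LpDuality hp f := by
  have := fact_one_le_ofReal_conjExponent hp
  rw [LpDuality, LpDualityMap_neg, map_neg, LpDuality]

theorem LpDuality_smul_of_pos (hp : 1 < p) {t : ℝ} (ht : 0 < t) (f : Lp E (ENNReal.ofReal p) μ) :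
    LpDuality hp (t • f) = t ^ (p - 1) • LpDuality hp f := by
  have := fact_one_le_ofReal_conjExponent hp
  rw [LpDuality, LpDualityMap_smul_of_pos hp ht, map_smul, LpDuality]

theorem norm_lpPairing_innerSL_le {q r : ℝ≥0∞} [q.HolderConjugate r] [Fact (1 ≤ q)] [Fact (1 ≤ r)]
    (f : Lp E q μ) : ‖(innerSL ℝ).lpPairing μ q r f‖ ≤ ‖f‖ := by
  refine ContinuousLinearMap.opNorm_le_bound _ (norm_nonneg f) fun g => ?_
  rw [ContinuousLinearMap.lpPairing_eq_integral,
    ← integral_congr_ae ((innerSL ℝ).coeFn_holder (r := 1) f g), ← L1.integral_eq_integral]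
  refine (L1.norm_integral_le _).trans (((innerSL ℝ).norm_holder_apply_apply_le f g).trans ?_)
  gcongr
  exact mul_le_of_le_one_left (norm_nonneg f) (norm_innerSL_le ℝ)

theorem norm_LpDuality_le (hp : 1 < p) (f : Lp E (ENNReal.ofReal p) μ) :
    ‖LpDuality hp f‖ ≤ ‖f‖ ^ (p - 1) := by
  have := fact_one_le_ofReal_conjExponent hp
  have := (Real.HolderConjugate.conjExponent hp).symm.ennrealOfReal
  exact (norm_lpPairing_innerSL_le _).trans (norm_LpDualityMap hp f).le

theorem tendsto_LpDuality_sub [FiniteDimensional ℝ E] (hp : 1 < p)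
    {ι : Type*} {l : Filter ι} {a b : ι → Lp E (ENNReal.ofReal p) μ} {M : ℝ}
    (ha : ∀ᶠ i in l, ‖a i‖ ≤ M) (hb : ∀ᶠ i in l, ‖b i‖ ≤ M)
    (hab : Tendsto (fun i => a i - b i) l (𝓝 0)) :
    Tendsto (fun i => LpDuality hp (a i) - LpDuality hp (b i)) l (𝓝 0) := by
  have := fact_one_le_ofReal_conjExponent hp
  have := (Real.HolderConjugate.conjExponent hp).symm.ennrealOfReal
  have hbound : ∀ i, ‖LpDuality hp (a i) - LpDuality hp (b i)‖ ≤
      ‖LpDualityMap hp (a i) - LpDualityMap hp (b i)‖ := fun i => by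
    rw [LpDuality, LpDuality, ← map_sub]
    exact norm_lpPairing_innerSL_le (LpDualityMap hp (a i) - LpDualityMap hp (b i))
  exact squeeze_zero_norm (E := StrongDual ℝ (Lp E (ENNReal.ofReal p) μ)) hbound
    (tendsto_LpDualityMap_sub hp ha hb hab)

theorem continuous_LpDuality [FiniteDimensional ℝ E] (hp : 1 < p) :
    Continuous (LpDuality (μ := μ) (E := E) hp) := by
  refine continuous_iff_continuousAt.2 fun f => tendsto_sub_nhds_zero_iff.1 ?_
  have hnear : ∀ᶠ g in 𝓝 f, ‖g‖ ≤ ‖f‖ + 1 :=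
    (continuous_norm.tendsto f).eventually_le_const (lt_add_one _)
  exact tendsto_LpDuality_sub hp hnear (.of_forall fun _ => (lt_add_one ‖f‖).le)
    (tendsto_sub_nhds_zero_iff.2 tendsto_id)

theorem hasDerivAt_Lp_norm_add_smul_rpow (hp : 1 < p) (f g : Lp E (ENNReal.ofReal p) μ) :
    HasDerivAt (fun t : ℝ => ‖f + t • g‖ ^ p) (p * LpDuality hp f g) 0 := by
  have hp0 : 0 < p := by linarith
  have hnorm : ∀ t : ℝ, ‖f + t • g‖ ^ p = ∫ x, ‖f x + t • g x‖ ^ p ∂μ := fun t =>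
    Lp_norm_rpow_eq_integral_of_ae_eq hp0 ((Lp.coeFn_add f (t • g)).trans
      (.add .rfl (Lp.coeFn_smul t g)))
  have hf := Lp.aestronglyMeasurable f
  have hg := Lp.aestronglyMeasurable g
  have hline : ∀ t : ℝ, AEStronglyMeasurable (fun x => f x + t • g x) μ := fun t =>
    hf.add (hg.const_smul t)
  have hbound : Integrable (fun x => p * (‖f x‖ + ‖g x‖) ^ p) μ := by
    have hsum := (memLp_norm_iff hf).2 (Lp.memLp f) |>.add ((memLp_norm_iff hg).2 (Lp.memLp g))
    have := (hsum.integrable_norm_rpow (by simpa using hp0) (by simp)).const_mul p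
    refine this.congr (ae_of_all _ fun x => ?_)
    simp only [Pi.add_apply, ENNReal.toReal_ofReal hp0.le]
    rw [Real.norm_of_nonneg (by positivity)]
  have hderiv := (hasDerivAt_integral_of_dominated_loc_of_deriv_le (μ := μ)
    (F := fun (t : ℝ) x => ‖f x + t • g x‖ ^ p)
    (F' := fun (t : ℝ) x => p * ⟪dualityMap p (f x + t • g x), g x⟫)
    (ball_mem_nhds (0 : ℝ) one_pos)
    (.of_forall fun t => ((hline t).norm.aemeasurable.pow_const _).aestronglyMeasurable)
    (by simpa using integrable_norm_rpow_of_Lp hp0 f)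
    ((((continuous_dualityMap hp).comp_aestronglyMeasurable (hline 0)).inner hg).const_mul p)
    (ae_of_all _ fun x t ht => by
      rw [norm_mul, Real.norm_of_nonneg hp0.le]
      gcongr
      exact abs_inner_dualityMap_add_smul_le hp _ _ (by simpa using (mem_ball.1 ht).le))
    hbound (ae_of_all _ fun x t _ => hasDerivAt_norm_add_smul_rpow hp (f x) (g x) t)).2
  simpa only [hnorm, LpDuality_apply, zero_smul, add_zero, integral_const_mul] using hderiv

end LpDuality

section PullbackDuality

variable {α : Type*} [MeasurableSpace α] {μ : Measure α} {E F : Type*} [NormedAddCommGroup E]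
  [InnerProductSpace ℝ E] [NormedAddCommGroup F] [InnerProductSpace ℝ F] {p : ℝ}
  [Fact (1 ≤ ENNReal.ofReal p)] {Y : Type*} [NormedAddCommGroup Y] [NormedSpace ℝ Y]
  {T : Y →L[ℝ] Lp E (ENNReal.ofReal p) μ} {G : Y →L[ℝ] Lp F (ENNReal.ofReal p) μ}

/-- The functional `y ↦ ∫ ‖f‖ ^ (p - 2) ⟪f, T y⟫`, the pullback of the duality map of `L^p`. -/
def pullbackDuality (hp : 1 < p) (T : Y →L[ℝ] Lp E (ENNReal.ofReal p) μ)
    (f : Lp E (ENNReal.ofReal p) μ) : StrongDual ℝ Y :=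
  (LpDuality hp f).comp T

theorem pullbackDuality_neg (hp : 1 < p) (f : Lp E (ENNReal.ofReal p) μ) :
    pullbackDuality hp T (-f) = -pullbackDuality hp T f := by
  rw [pullbackDuality, LpDuality_neg, ContinuousLinearMap.neg_comp, pullbackDuality]

theorem continuous_pullbackDuality [FiniteDimensional ℝ E] (hp : 1 < p) :
    Continuous (pullbackDuality hp T) :=
  (continuous_LpDuality hp).clm_comp continuous_const

theorem pullbackDuality_apply_self (hp : 1 < p) {y : Y} (hy : ‖T y‖ = 1) :
    pullbackDuality hp T (T y) y = 1 := by
  rw [pullbackDuality, ContinuousLinearMap.comp_apply, LpDuality_self, hy, Real.one_rpow]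

theorem pullbackDuality_ne_zero (hp : 1 < p) {y : Y} (hy : ‖T y‖ = 1) :
    pullbackDuality hp T (T y) ≠ 0 := fun h => by
  simpa [h] using pullbackDuality_apply_self hp hy

theorem inv_norm_le_norm_pullbackDuality (hp : 1 < p) {y : Y} (hy : ‖T y‖ = 1) :
    ‖y‖⁻¹ ≤ ‖pullbackDuality hp T (T y)‖ := by
  have hy0 : y ≠ 0 := fun h => by simp [h] at hy
  rw [inv_le_iff_one_le_mul₀ (norm_pos_iff.2 hy0)]
  calc (1 : ℝ) = ‖pullbackDuality hp T (T y) y‖ := by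
        rw [pullbackDuality_apply_self hp hy, norm_one]
    _ ≤ ‖pullbackDuality hp T (T y)‖ * ‖y‖ := (pullbackDuality hp T (T y)).le_opNorm y

theorem norm_pullbackDuality_le (hp : 1 < p) (f : Lp E (ENNReal.ofReal p) μ) :
    ‖pullbackDuality hp T f‖ ≤ ‖f‖ ^ (p - 1) * ‖T‖ :=
  (ContinuousLinearMap.opNorm_comp_le _ T).trans
    (mul_le_mul_of_nonneg_right (norm_LpDuality_le hp f) (norm_nonneg T))

/-- The residual at `v` of the equation `-Δ_p v = c |v| ^ (p - 2) v`, with abstract operators `T`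
and `G` in place of the inclusion in `L^p` and the gradient. -/
def eigenResidual (hp : 1 < p) (T : Y →L[ℝ] Lp E (ENNReal.ofReal p) μ)
    (G : Y →L[ℝ] Lp F (ENNReal.ofReal p) μ) (c : ℝ) (v : Y) : StrongDual ℝ Y :=
  pullbackDuality hp G (G v) - c • pullbackDuality hp T (T v)

theorem continuous_eigenResidual [FiniteDimensional ℝ E] [FiniteDimensional ℝ F] (hp : 1 < p)
    (c : ℝ) : Continuous (eigenResidual hp T G c) :=
  ((continuous_pullbackDuality hp).comp G.continuous).sub
    (((continuous_pullbackDuality hp).comp T.continuous).const_smul c)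

theorem abs_pullbackDuality_apply_le (hp : 1 < p) {f : Lp E (ENNReal.ofReal p) μ}
    (hf : ‖f‖ ≤ 1) (y : Y) : |pullbackDuality hp T f y| ≤ ‖T y‖ := by
  have hdual : ‖LpDuality hp f‖ ≤ 1 := (norm_LpDuality_le hp f).trans
    (Real.rpow_le_one (norm_nonneg f) hf (by linarith))
  exact ((LpDuality hp f).le_of_opNorm_le_of_le hdual le_rfl).trans_eq (one_mul _)

end PullbackDuality

section Gradient

variable {F : Type*} [NormedAddCommGroup F] [InnerProductSpace ℝ F] [CompleteSpace F]
  {f g : F → ℝ} {x : F}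

theorem norm_gradient (f : F → ℝ) (x : F) : ‖gradient f x‖ = ‖fderiv ℝ f x‖ :=
  LinearIsometryEquiv.norm_map _ _

theorem continuous_gradient (hf : ContDiff ℝ 1 f) : Continuous (gradient f) :=
  (LinearIsometryEquiv.continuous _).comp (hf.continuous_fderiv one_ne_zero)

theorem hasCompactSupport_gradient (hf : HasCompactSupport f) : HasCompactSupport (gradient f) :=
  (hf.fderiv ℝ).comp_left (map_zero (InnerProductSpace.toDual ℝ F).symm)

theorem gradient_add (hf : DifferentiableAt ℝ f x) (hg : DifferentiableAt ℝ g x) :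
    gradient (f + g) x = gradient f x + gradient g x := by
  simp [gradient, fderiv_add hf hg]

theorem gradient_const_smul (c : ℝ) (hf : DifferentiableAt ℝ f x) :
    gradient (c • f) x = c • gradient f x := by
  simp [gradient, fderiv_const_smul hf c]

theorem gradient_mul (hf : DifferentiableAt ℝ f x) (hg : DifferentiableAt ℝ g x) :
    gradient (f * g) x = f x • gradient g x + g x • gradient f x := by
  simp [gradient, fderiv_mul hf hg]

theorem norm_gradient_comp_smul (f : F → ℝ) (c : ℝ) (x : F) :
    ‖gradient (fun y => f (c • y)) x‖ = |c| * ‖gradient f (c • x)‖ := by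
  rw [norm_gradient, norm_gradient, fderiv_comp_smul, norm_smul, Real.norm_eq_abs]

end Gradient

section Multiplication

variable {α E : Type*} [MeasurableSpace α] {μ : Measure α} [NormedAddCommGroup E]
  [NormedSpace ℝ E] {q : ℝ≥0∞} [Fact (1 ≤ q)]

/-- Multiplication of `L^q` functions by an essentially bounded scalar function. -/
def LpMul {η : α → ℝ} (hη : MemLp η ∞ μ) : Lp E q μ →L[ℝ] Lp E q μ :=
  (ContinuousLinearMap.lsmul ℝ ℝ).holderL μ ∞ q q (hη.toLp η)

/-- Multiplication of scalar `L^q` functions by an essentially bounded vector field. -/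
def LpMulVec {b : α → E} (hb : MemLp b ∞ μ) : Lp ℝ q μ →L[ℝ] Lp E q μ :=
  (ContinuousLinearMap.lsmul ℝ ℝ).flip.holderL μ ∞ q q (hb.toLp b)

theorem coeFn_LpMul {η : α → ℝ} (hη : MemLp η ∞ μ) (f : Lp E q μ) :
    LpMul hη f =ᵐ[μ] fun x => η x • f x := by
  filter_upwards [(ContinuousLinearMap.lsmul ℝ ℝ).coeFn_holder (r := q) (hη.toLp η) f,
    hη.coeFn_toLp] with x hx hηx
  exact hx.trans (by rw [hηx, ContinuousLinearMap.lsmul_apply])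

theorem coeFn_LpMulVec {b : α → E} (hb : MemLp b ∞ μ) (f : Lp ℝ q μ) :
    LpMulVec hb f =ᵐ[μ] fun x => f x • b x := by
  filter_upwards [(ContinuousLinearMap.lsmul ℝ ℝ).flip.coeFn_holder (r := q) (hb.toLp b) f,
    hb.coeFn_toLp] with x hx hbx
  exact hx.trans (by rw [hbx, ContinuousLinearMap.flip_apply, ContinuousLinearMap.lsmul_apply])

theorem norm_LpMul_le {η : α → ℝ} (hη : MemLp η ∞ μ) {C : ℝ} (hC : ∀ x, |η x| ≤ C)
    (f : Lp E q μ) : ‖LpMul hη f‖ ≤ C * ‖f‖ := by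
  refine Lp.norm_le_mul_norm_of_ae_le_mul ?_
  filter_upwards [coeFn_LpMul hη f] with x hx
  rw [hx, norm_smul, Real.norm_eq_abs]
  gcongr
  exact hC x

theorem norm_LpMulVec_le {b : α → E} (hb : MemLp b ∞ μ) {C : ℝ} (hC : ∀ x, ‖b x‖ ≤ C)
    (f : Lp ℝ q μ) : ‖LpMulVec hb f‖ ≤ C * ‖f‖ := by
  refine Lp.norm_le_mul_norm_of_ae_le_mul ?_
  filter_upwards [coeFn_LpMulVec hb f] with x hx
  rw [hx, norm_smul, mul_comm]
  gcongr
  exact hC x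

/-- Truncation of an `L^q` function to a measurable set. -/
def LpIndicator {s : Set α} (hs : MeasurableSet s) : Lp E q μ →L[ℝ] Lp E q μ :=
  LpMul (η := s.indicator 1) (memLp_top_of_bound
    (measurable_one.indicator hs).aestronglyMeasurable 1
    (ae_of_all _ fun x => (norm_indicator_le_norm_self 1 x).trans_eq norm_one))

theorem coeFn_LpIndicator {s : Set α} (hs : MeasurableSet s) (f : Lp E q μ) :
    LpIndicator hs f =ᵐ[μ] s.indicator f := by
  refine (coeFn_LpMul _ f).trans (ae_of_all _ fun x => ?_)
  by_cases hx : x ∈ s <;> simp [hx]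

theorem norm_sub_LpIndicator_le {s : Set α} (hs : MeasurableSet s) {η : α → ℝ}
    (hη : MemLp η ∞ μ) (hηs : ∀ x, x ∉ s → η x = 1) (f : Lp E q μ) :
    ‖f - LpIndicator hs f‖ ≤ ‖LpMul hη f‖ := by
  refine Lp.norm_le_norm_of_ae_le ?_
  filter_upwards [Lp.coeFn_sub f (LpIndicator hs f), coeFn_LpIndicator hs f, coeFn_LpMul hη f]
    with x h1 h2 h3
  rw [h1, Pi.sub_apply, h2, h3]
  by_cases hx : x ∈ s
  · simp [hx]
  · simp [hx, hηs x hx]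

end Multiplication

theorem LpDuality_LpMul_rpow {α E : Type*} [MeasurableSpace α] {μ : Measure α}
    [NormedAddCommGroup E] [InnerProductSpace ℝ E] {p : ℝ} [Fact (1 ≤ ENNReal.ofReal p)]
    (hp : 1 < p) {ψ : α → ℝ} (hψ0 : ∀ x, 0 ≤ ψ x) (hψ : MemLp ψ ∞ μ)
    (hψp : MemLp (fun x => ψ x ^ p) ∞ μ) (f : Lp E (ENNReal.ofReal p) μ) :
    LpDuality hp f (LpMul hψp f) = ‖LpMul hψ f‖ ^ p := by
  rw [LpDuality_apply, Lp_norm_rpow_eq_integral_of_ae_eq (by linarith) (coeFn_LpMul hψ f)]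
  refine integral_congr_ae ((coeFn_LpMul hψp f).mono fun x hx => ?_)
  simp only [hx, real_inner_smul_right, inner_dualityMap_self (by linarith : p ≠ 0), norm_smul,
    Real.norm_of_nonneg (hψ0 x), Real.mul_rpow (hψ0 x) (norm_nonneg (f x))]

section Sobolev

variable {N : ℕ} {q : ℝ≥0∞} {Ω Ω' : Set (EucN N)} {f g η : EucN N → ℝ}

theorem IsTestFun.differentiableAt (hf : IsTestFun Ω f) (x : EucN N) : DifferentiableAt ℝ f x :=
  hf.1.differentiable (by simp) x

theorem IsTestFun.memLp (hf : IsTestFun Ω f) (q : ℝ≥0∞) : MemLp f q volume :=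
  hf.1.continuous.memLp_of_hasCompactSupport hf.2.1

theorem IsTestFun.memLp_gradient (hf : IsTestFun Ω f) (q : ℝ≥0∞) :
    MemLp (gradient f) q volume :=
  (continuous_gradient (hf.1.of_le (by simp))).memLp_of_hasCompactSupport
    (hasCompactSupport_gradient hf.2.1)

theorem isTestFun_zero : IsTestFun Ω (0 : EucN N → ℝ) :=
  ⟨contDiff_const, HasCompactSupport.zero, by simp [tsupport]⟩

theorem IsTestFun.add (hf : IsTestFun Ω f) (hg : IsTestFun Ω g) : IsTestFun Ω (f + g) :=
  ⟨hf.1.add hg.1, hf.2.1.add hg.2.1, (tsupport_add f g).trans (union_subset hf.2.2 hg.2.2)⟩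

theorem IsTestFun.const_smul (c : ℝ) (hf : IsTestFun Ω f) : IsTestFun Ω (c • f) :=
  ⟨contDiff_const.smul hf.1, hf.2.1.smul_left (f := fun _ => c),
    (tsupport_smul_subset_right (fun _ => c) f).trans hf.2.2⟩

theorem IsTestFun.mul_left (hη : ContDiff ℝ (⊤ : ℕ∞) η) (hs : Ω ∩ tsupport η ⊆ Ω')
    (hf : IsTestFun Ω f) : IsTestFun Ω' (η * f) :=
  ⟨hη.mul hf.1, hf.2.1.mul_left, (subset_inter (tsupport_mul_subset_right.trans hf.2.2)
    tsupport_mul_subset_left).trans hs⟩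

/-- The pairs `(ψ, ∇ψ)` with `ψ` a test function on `Ω`, as a subspace of `L^q × L^q`. -/
def testPairs (q : ℝ≥0∞) (Ω : Set (EucN N)) : Submodule ℝ (SobPair N q) where
  carrier := {w | IsTestPair q Ω w}
  zero_mem' := ⟨0, isTestFun_zero, Lp.coeFn_zero _ _ _,
    (Lp.coeFn_zero _ _ _).trans (ae_of_all _ fun x => by simp [gradient])⟩
  add_mem' := by
    rintro a b ⟨f, hf, hf1, hf2⟩ ⟨g, hg, hg1, hg2⟩
    refine ⟨f + g, hf.add hg, (Lp.coeFn_add a.1 b.1).trans (hf1.add hg1),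
      (Lp.coeFn_add a.2 b.2).trans ((hf2.add hg2).trans (ae_of_all _ fun x => ?_))⟩
    exact (gradient_add (hf.differentiableAt x) (hg.differentiableAt x)).symm
  smul_mem' := by
    rintro c a ⟨f, hf, hf1, hf2⟩
    refine ⟨c • f, hf.const_smul c, (Lp.coeFn_smul c a.1).trans (hf1.const_smul c),
      (Lp.coeFn_smul c a.2).trans ((hf2.const_smul c).trans (ae_of_all _ fun x => ?_))⟩
    exact (gradient_const_smul c (hf.differentiableAt x)).symm

end Sobolev

section Sobolev10

variable {N : ℕ} {p : ℝ} [Fact (1 ≤ ENNReal.ofReal p)] {Ω Ω' : Set (EucN N)} {η : EucN N → ℝ}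

/-- Pairs `(u, g) ∈ L^p × L^p` with the norm `(‖u‖_p ^ p + ‖g‖_p ^ p) ^ (1 / p)`. -/
abbrev SobolevProd (N : ℕ) (p : ℝ) :=
  WithLp (ENNReal.ofReal p) (SobPair N (ENNReal.ofReal p))

/-- The Sobolev space `W^{1,p}_0(Ω)` with the norm `(‖u‖_p ^ p + ‖∇u‖_p ^ p) ^ (1 / p)`, which makes
it uniformly convex. Unlike in `W10`, the ambient product carries the `ℓ^p` norm. -/
def Sobolev10 (N : ℕ) (p : ℝ) [Fact (1 ≤ ENNReal.ofReal p)] (Ω : Set (EucN N)) :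
    Submodule ℝ (SobolevProd N p) :=
  (testPairs (ENNReal.ofReal p) Ω).topologicalClosure.comap
    (WithLp.prodContinuousLinearEquiv (ENNReal.ofReal p) ℝ _ _).toLinearMap

namespace Sobolev10

theorem isClosed : IsClosed (Sobolev10 N p Ω : Set (SobolevProd N p)) :=
  (Submodule.isClosed_topologicalClosure _).preimage
    (WithLp.prodContinuousLinearEquiv (ENNReal.ofReal p) ℝ _ _).continuous

instance : CompleteSpace (Sobolev10 N p Ω) :=
  isClosed.completeSpace_coe

theorem uniformConvexSpace (hp : 1 < p) : UniformConvexSpace (Sobolev10 N p Ω) := by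
  have hLp {E : Type} [NormedAddCommGroup E] [InnerProductSpace ℝ E] [FiniteDimensional ℝ E] :
      PowUniformConvex p (Lp E (ENNReal.ofReal p) (volume : Measure (EucN N))) :=
    (powUniformConvex_of_finiteDimensional hp).lp (by linarith)
  have := (hLp.withLp_prod hp.le (hLp (E := EucN N)) (X := Lp ℝ _ _)).uniformConvexSpace hp.le
  exact uniformConvexSpace_submodule _

/-- The inclusion of `W^{1,p}_0(Ω)` in `L^p`. -/
def toLp (Ω : Set (EucN N)) :
    Sobolev10 N p Ω →L[ℝ] Lp ℝ (ENNReal.ofReal p) (volume : Measure (EucN N)) :=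
  (WithLp.fstL _ ℝ _ _).comp (Sobolev10 N p Ω).subtypeL

/-- The weak gradient on `W^{1,p}_0(Ω)`. -/
def grad (Ω : Set (EucN N)) :
    Sobolev10 N p Ω →L[ℝ] Lp (EucN N) (ENNReal.ofReal p) (volume : Measure (EucN N)) :=
  (WithLp.sndL _ ℝ _ _).comp (Sobolev10 N p Ω).subtypeL

theorem norm_rpow (hp : 0 < p) (w : Sobolev10 N p Ω) :
    ‖w‖ ^ p = ‖toLp Ω w‖ ^ p + ‖grad Ω w‖ ^ p :=
  WithLp_prod_norm_rpow hp _

theorem norm_toLp_le (w : Sobolev10 N p Ω) : ‖toLp Ω w‖ ≤ ‖w‖ :=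
  WithLp.norm_fst_le _ _

theorem norm_grad_le (w : Sobolev10 N p Ω) : ‖grad Ω w‖ ≤ ‖w‖ :=
  WithLp.norm_snd_le _ _

end Sobolev10

/-- Smooth functions which are bounded together with their gradient; they act on Sobolev spaces
by multiplication. -/
structure IsSobolevMultiplier (η : EucN N → ℝ) : Prop where
  contDiff : ContDiff ℝ (⊤ : ℕ∞) η
  memLp : MemLp η ∞ volume
  memLp_gradient : MemLp (gradient η) ∞ volume

/-- Multiplication of a pair `(u, ∇u)` by `η`, following the Leibniz rule. -/
def sobolevPairMul (hη : IsSobolevMultiplier η) :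
    SobolevProd N p →L[ℝ] SobolevProd N p :=
  (WithLp.prodContinuousLinearEquiv _ ℝ _ _).symm.toContinuousLinearMap.comp
    (((LpMul hη.memLp).comp (WithLp.fstL _ ℝ _ _)).prod
      ((LpMul hη.memLp).comp (WithLp.sndL _ ℝ _ _) +
        (LpMulVec hη.memLp_gradient).comp (WithLp.fstL _ ℝ _ _)))

theorem sobolevPairMul_mem (hη : IsSobolevMultiplier η) (hs : Ω ∩ tsupport η ⊆ Ω')
    {w : SobolevProd N p} (hw : w ∈ Sobolev10 N p Ω) :
    sobolevPairMul hη w ∈ Sobolev10 N p Ω' := by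
  refine map_mem_closure (f := fun z => (sobolevPairMul hη (WithLp.toLp (ENNReal.ofReal p) z)).ofLp)
    ?_ hw ?_
  · fun_prop
  rintro z ⟨f, hf, hf1, hf2⟩
  refine ⟨η * f, hf.mul_left hη.contDiff hs, ?_, ?_⟩
  · filter_upwards [coeFn_LpMul hη.memLp z.1, hf1] with x h1 h2
    exact h1.trans (by rw [h2, smul_eq_mul, Pi.mul_apply])
  · filter_upwards [Lp.coeFn_add (LpMul hη.memLp z.2) (LpMulVec hη.memLp_gradient z.1),
      coeFn_LpMul hη.memLp z.2, coeFn_LpMulVec hη.memLp_gradient z.1, hf1, hf2]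
      with x h1 h2 h3 h4 h5
    exact h1.trans (by
      rw [Pi.add_apply, h2, h3, h4, h5,
        gradient_mul (hη.contDiff.differentiable (by simp) x) (hf.differentiableAt x)])

/-- Multiplication by `η` as a map `W^{1,p}_0(Ω) → W^{1,p}_0(Ω')`. -/
def Sobolev10.mul (hη : IsSobolevMultiplier η) (hs : Ω ∩ tsupport η ⊆ Ω') :
    Sobolev10 N p Ω →L[ℝ] Sobolev10 N p Ω' :=
  ((sobolevPairMul hη).comp (Sobolev10 N p Ω).subtypeL).codRestrict (Sobolev10 N p Ω')
    fun w => sobolevPairMul_mem hη hs w.2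

theorem Sobolev10.toLp_mul (hη : IsSobolevMultiplier η) (hs : Ω ∩ tsupport η ⊆ Ω')
    (w : Sobolev10 N p Ω) : toLp Ω' (mul hη hs w) = LpMul hη.memLp (toLp Ω w) :=
  rfl

end Sobolev10

section Cutoff

variable {F : Type*} [NormedAddCommGroup F] [InnerProductSpace ℝ F]

theorem expNegInvGlue_rpow {p : ℝ} (hp : 0 < p) (x : ℝ) :
    expNegInvGlue x ^ p = expNegInvGlue (x / p) := by
  rcases le_or_gt x 0 with hx | hx
  · rw [expNegInvGlue.zero_of_nonpos hx,
      expNegInvGlue.zero_of_nonpos (div_nonpos_of_nonpos_of_nonneg hx hp.le),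
      Real.zero_rpow hp.ne']
  · rw [expNegInvGlue, expNegInvGlue, if_neg hx.not_ge, if_neg (div_pos hx hp).not_ge,
      ← Real.exp_mul, inv_div, div_eq_inv_mul, neg_mul]

theorem contDiff_smoothTransition_rpow {p : ℝ} (hp : 0 < p) {n : ℕ∞} :
    ContDiff ℝ n fun x => Real.smoothTransition x ^ p := by
  have heq : (fun x => Real.smoothTransition x ^ p) = fun x =>
      expNegInvGlue (x / p) / (expNegInvGlue x + expNegInvGlue (1 - x)) ^ p := by
    funext x
    rw [Real.smoothTransition, Real.div_rpow (expNegInvGlue.nonneg _)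
      (Real.smoothTransition.pos_denom x).le, expNegInvGlue_rpow hp]
  rw [heq]
  have hpos := Real.smoothTransition.pos_denom
  refine .div (expNegInvGlue.contDiff.comp (contDiff_id.div_const p)) (.rpow_const_of_ne ?_ ?_)
    fun x => (Real.rpow_pos_of_pos (hpos x) _).ne'
  · exact expNegInvGlue.contDiff.add (expNegInvGlue.contDiff.comp (contDiff_const.sub contDiff_id))
  · exact fun x => (hpos x).ne'

theorem exists_norm_gradient_le_of_eq_const [FiniteDimensional ℝ F] {f : F → ℝ}
    (hf : ContDiff ℝ 1 f) {r c : ℝ} (hc : ∀ x, r ≤ ‖x‖ → f x = c) :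
    ∃ C, ∀ x, ‖gradient f x‖ ≤ C := by
  refine HasCompactSupport.exists_bound_of_continuous (.intro (isCompact_closedBall 0 r)
    fun x hx => ?_) (continuous_gradient hf)
  have hx' : r < ‖x‖ := by simpa using hx
  have hconst : f =ᶠ[𝓝 x] fun _ => c :=
    (continuous_norm.continuousAt.eventually_const_lt hx').mono fun y hy => hc y hy.le
  rw [hconst.gradient_eq, gradient_fun_const]

/-- A radial cutoff at scale `R`: it vanishes for `‖x‖ ≤ 2 R` and equals `1` for `‖x‖ ≥ 3 R`. It is
built on `Real.smoothTransition` because all positive powers of the latter are smooth. -/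
def tailCutoff (R : ℝ) (x : F) : ℝ := Real.smoothTransition (‖R⁻¹ • x‖ ^ 2 - 4)

theorem tailCutoff_nonneg (R : ℝ) (x : F) : 0 ≤ tailCutoff R x :=
  Real.smoothTransition.nonneg _

theorem tailCutoff_le_one (R : ℝ) (x : F) : tailCutoff R x ≤ 1 :=
  Real.smoothTransition.le_one _

theorem tailCutoff_eq_one {R : ℝ} (hR : 0 < R) {x : F} (hx : 3 * R ≤ ‖x‖) :
    tailCutoff R x = 1 := by
  have hscale : 3 ≤ ‖R⁻¹ • x‖ := by
    rwa [norm_smul, norm_inv, Real.norm_of_nonneg hR.le, le_inv_mul_iff₀' hR]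
  exact Real.smoothTransition.one_of_one_le (by nlinarith)

theorem tsupport_tailCutoff_subset {R : ℝ} (hR : 0 < R) :
    tsupport (tailCutoff R : F → ℝ) ⊆ {x | 2 * R ≤ ‖x‖} := by
  refine closure_minimal (fun x hx => ?_) (isClosed_le continuous_const continuous_norm)
  contrapose! hx
  have hscale : ‖R⁻¹ • x‖ ≤ 2 := by
    rw [norm_smul, norm_inv, Real.norm_of_nonneg hR.le, inv_mul_le_iff₀' hR]
    exact (not_le.1 hx).le
  rw [Function.notMem_support]
  exact Real.smoothTransition.zero_of_nonpos (by nlinarith [norm_nonneg (R⁻¹ • x)])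

theorem inter_tsupport_tailCutoff_subset (s : Set F) {R R₀ : ℝ} (hR : 0 < R) (hR₀ : R₀ ≤ R) :
    s ∩ tsupport (tailCutoff R) ⊆ s \ closure (ball 0 R₀) := by
  refine fun x hx => ⟨hx.1, fun hxR => ?_⟩
  have hin : ‖x‖ ≤ R₀ := by simpa using closure_ball_subset_closedBall hxR
  have hout : 2 * R ≤ ‖x‖ := tsupport_tailCutoff_subset hR hx.2
  linarith

theorem contDiff_tailCutoff_rpow {p : ℝ} (hp : 0 < p) (R : ℝ) {n : ℕ∞} :
    ContDiff ℝ n fun x : F => tailCutoff R x ^ p :=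
  (contDiff_smoothTransition_rpow hp).comp
    (((contDiff_norm_sq ℝ).comp (contDiff_const_smul R⁻¹)).sub contDiff_const)

theorem exists_norm_gradient_tailCutoff_rpow_le [FiniteDimensional ℝ F] {p : ℝ}
    (hp : 0 < p) :
    ∃ C : ℝ, ∀ R : ℝ, 0 < R → ∀ x : F, ‖gradient (fun y => tailCutoff R y ^ p) x‖ ≤ C / R := by
  obtain ⟨C, hC⟩ := exists_norm_gradient_le_of_eq_const (F := F) (r := 3) (c := 1)
    (contDiff_tailCutoff_rpow (n := 1) hp 1)
    fun x hx => by rw [tailCutoff_eq_one one_pos (by simpa using hx), Real.one_rpow]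
  refine ⟨C, fun R hR x => ?_⟩
  have hscale : (fun y : F => tailCutoff R y ^ p) = fun y => tailCutoff 1 (R⁻¹ • y) ^ p := by
    simp only [tailCutoff, inv_one, one_smul]
  rw [hscale, norm_gradient_comp_smul (fun y => tailCutoff 1 y ^ p), abs_of_pos (inv_pos.2 hR),
    div_eq_inv_mul]
  gcongr
  exact hC _

theorem exists_norm_gradient_tailCutoff_le [FiniteDimensional ℝ F] {p : ℝ} (hp : 0 < p) :
    ∃ C : ℝ, ∀ R : ℝ, 0 < R → ∀ x : F, ‖gradient (tailCutoff R) x‖ ≤ C / R ∧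
      ‖gradient (fun y => tailCutoff R y ^ p) x‖ ≤ C / R := by
  obtain ⟨C₁, hC₁⟩ := exists_norm_gradient_tailCutoff_rpow_le (F := F) one_pos
  obtain ⟨C₂, hC₂⟩ := exists_norm_gradient_tailCutoff_rpow_le (F := F) hp
  simp only [Real.rpow_one] at hC₁
  exact ⟨max C₁ C₂, fun R hR x => ⟨(hC₁ R hR x).trans (by gcongr; exact le_max_left _ _),
    (hC₂ R hR x).trans (by gcongr; exact le_max_right _ _)⟩⟩

theorem isSobolevMultiplier_tailCutoff_rpow {N : ℕ} {p R : ℝ} (hp : 0 < p) (hR : 0 < R) :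
    IsSobolevMultiplier fun x : EucN N => tailCutoff R x ^ p where
  contDiff := contDiff_tailCutoff_rpow hp R
  memLp := memLp_top_of_bound
    (contDiff_tailCutoff_rpow (n := 0) hp R).continuous.aestronglyMeasurable 1
    (ae_of_all _ fun x => by
      rw [Real.norm_of_nonneg (Real.rpow_nonneg (tailCutoff_nonneg R x) p)]
      exact Real.rpow_le_one (tailCutoff_nonneg R x) (tailCutoff_le_one R x) hp.le)
  memLp_gradient := by
    obtain ⟨C, hC⟩ := exists_norm_gradient_tailCutoff_rpow_le (F := EucN N) hp
    exact memLp_top_of_bound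
      (continuous_gradient (contDiff_tailCutoff_rpow (n := 1) hp R)).aestronglyMeasurable (C / R)
      (ae_of_all _ (hC R hR))

theorem isSobolevMultiplier_tailCutoff {N : ℕ} {R : ℝ} (hR : 0 < R) :
    IsSobolevMultiplier (tailCutoff R : EucN N → ℝ) := by
  simpa using isSobolevMultiplier_tailCutoff_rpow (N := N) one_pos hR

end Cutoff

theorem rpow_le_rpow_add_mul_sub {p a b : ℝ} (hp : 1 ≤ p) (ha : 0 ≤ a) (hb : 0 ≤ b) :
    b ^ p ≤ a ^ p + p * b ^ (p - 1) * (b - a) := by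
  rcases hb.eq_or_lt with rfl | hb
  · rw [Real.zero_rpow (by linarith)]
    rcases hp.eq_or_lt with rfl | hp
    · simp
    · rw [Real.zero_rpow (by linarith)]
      simpa using Real.rpow_nonneg ha p
  have hbern := one_add_mul_self_le_rpow_one_add (s := a / b - 1)
    (by linarith [div_nonneg ha hb.le]) hp
  rw [add_sub_cancel, Real.div_rpow ha hb.le, le_div_iff₀ (by positivity)] at hbern
  have hpow : b ^ p = b ^ (p - 1) * b := by
    rw [← Real.rpow_add_one hb.ne', sub_add_cancel]
  have hexp : (1 + p * (a / b - 1)) * b ^ p = b ^ p - p * b ^ (p - 1) * (b - a) := by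
    rw [hpow]; field_simp; ring
  linarith

section Tightness

variable {N : ℕ} {p : ℝ} [Fact (1 ≤ ENNReal.ofReal p)] {Ω Ω' : Set (EucN N)} {ψ : EucN N → ℝ}
  {c lam : ℝ}

namespace Sobolev10

theorem mul_norm_toLp_rpow_le_of_le_lambda1p (hp : 1 < p)
    (hlam : ENNReal.ofReal lam ≤ lambda1p N p hp.le Ω) (w : Sobolev10 N p Ω) :
    lam * ‖toLp Ω w‖ ^ p ≤ ‖grad Ω w‖ ^ p := by
  have hp0 : 0 < p := by linarith
  rcases eq_or_ne (toLp Ω w) 0 with h0 | h0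
  · rw [h0, norm_zero, Real.zero_rpow hp0.ne', mul_zero]
    positivity
  have hpos : 0 < ‖toLp Ω w‖ := norm_pos_iff.2 h0
  set z := ‖toLp Ω w‖⁻¹ • w with hz
  have hnorm : ‖toLp Ω z‖ = 1 := by
    rw [hz, map_smul, norm_smul, norm_inv, norm_norm, inv_mul_cancel₀ hpos.ne']
  have hle : ENNReal.ofReal lam ≤ ENNReal.ofReal (‖grad Ω z‖ ^ p) := by
    refine hlam.trans (sInf_le ⟨_, z.2, ?_, ?_⟩)
    · exact (Lp_norm_rpow_eq_integral hp0 (toLp Ω z)).symm.trans (by rw [hnorm, Real.one_rpow])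
    · rw [Lp_norm_rpow_eq_integral hp0]
      rfl
  rw [ENNReal.ofReal_le_ofReal_iff (by positivity), hz, map_smul,
    norm_smul_rpow_of_pos _ (inv_pos.2 hpos), Real.inv_rpow hpos.le,
    le_inv_mul_iff₀' (by positivity)] at hle
  exact hle

theorem norm_grad_mul_rpow_le (hp : 1 < p) (hψ0 : ∀ x, 0 ≤ ψ x) (hψ1 : ∀ x, ψ x ≤ 1)
    (hψ : IsSobolevMultiplier ψ) {δ : ℝ} (hδ : δ ≤ 1) (hgrad : ∀ x, ‖gradient ψ x‖ ≤ δ)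
    (hs : Ω ∩ tsupport ψ ⊆ Ω') {v : Sobolev10 N p Ω} (hv : ‖v‖ ≤ 1) :
    ‖grad Ω' (mul hψ hs v)‖ ^ p ≤ ‖LpMul hψ.memLp (grad Ω v)‖ ^ p + p * 2 ^ (p - 1) * δ := by
  set b := LpMul hψ.memLp (grad Ω v)
  set d := LpMulVec hψ.memLp_gradient (toLp Ω v)
  have hδ0 : 0 ≤ δ := (norm_nonneg _).trans (hgrad 0)
  have hb : ‖b‖ ≤ 1 := by
    refine (norm_LpMul_le hψ.memLp (C := 1) (fun x => ?_) _).trans ?_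
    · rw [abs_of_nonneg (hψ0 x)]
      exact hψ1 x
    · linarith [norm_grad_le v]
  have hd : ‖d‖ ≤ δ := (norm_LpMulVec_le hψ.memLp_gradient hgrad _).trans
    (mul_le_of_le_one_right hδ0 ((norm_toLp_le v).trans hv))
  have hbd : ‖b + d‖ ≤ ‖b‖ + ‖d‖ := norm_add_le b d
  calc ‖b + d‖ ^ p ≤ ‖b‖ ^ p + p * ‖b + d‖ ^ (p - 1) * (‖b + d‖ - ‖b‖) :=
        rpow_le_rpow_add_mul_sub hp.le (norm_nonneg b) (norm_nonneg _)
    _ ≤ ‖b‖ ^ p + p * ‖b + d‖ ^ (p - 1) * δ := by gcongr; linarith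
    _ ≤ ‖b‖ ^ p + p * 2 ^ (p - 1) * δ := by gcongr; linarith

theorem sub_mul_norm_LpMul_rpow_le (hp : 1 < p) (hψ0 : ∀ x, 0 ≤ ψ x) (hψ1 : ∀ x, ψ x ≤ 1)
    (hψ : IsSobolevMultiplier ψ) (hψp : IsSobolevMultiplier fun x => ψ x ^ p)
    {δ : ℝ} (hδ : δ ≤ 1) (hgrad : ∀ x, ‖gradient ψ x‖ ≤ δ)
    (hgradp : ∀ x, ‖gradient (fun y => ψ y ^ p) x‖ ≤ δ) (hs : Ω ∩ tsupport ψ ⊆ Ω')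
    (hpoincare : ∀ w : Sobolev10 N p Ω', lam * ‖toLp Ω' w‖ ^ p ≤ ‖grad Ω' w‖ ^ p)
    {v : Sobolev10 N p Ω} (hv : ‖v‖ ≤ 1) :
    (lam - c) * ‖LpMul hψ.memLp (toLp Ω v)‖ ^ p ≤
      eigenResidual hp (toLp Ω) (grad Ω) c v (mul hψp inter_subset_left v) +
        (1 + p * 2 ^ (p - 1)) * δ := by
  have hres : eigenResidual hp (toLp Ω) (grad Ω) c v (mul hψp inter_subset_left v) =
      ‖LpMul hψ.memLp (grad Ω v)‖ ^ p +
        LpDuality hp (grad Ω v) (LpMulVec hψp.memLp_gradient (toLp Ω v)) -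
        c * ‖LpMul hψ.memLp (toLp Ω v)‖ ^ p := by
    rw [← LpDuality_LpMul_rpow hp hψ0 hψ.memLp hψp.memLp,
      ← LpDuality_LpMul_rpow hp hψ0 hψ.memLp hψp.memLp, ← map_add]
    rfl
  have hδ0 : 0 ≤ δ := (norm_nonneg _).trans (hgrad 0)
  have herror : |LpDuality hp (grad Ω v) (LpMulVec hψp.memLp_gradient (toLp Ω v))| ≤ δ := by
    refine ((LpDuality hp (grad Ω v)).le_of_opNorm_le (norm_LpDuality_le hp _) _).trans ?_
    have hpow : ‖grad Ω v‖ ^ (p - 1) ≤ 1 :=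
      Real.rpow_le_one (norm_nonneg _) ((norm_grad_le v).trans hv) (by linarith)
    have hd := (norm_LpMulVec_le hψp.memLp_gradient hgradp (toLp Ω v)).trans
      (mul_le_of_le_one_right hδ0 ((norm_toLp_le v).trans hv))
    exact (mul_le_mul hpow hd (norm_nonneg _) zero_le_one).trans_eq (one_mul δ)
  have hgap := hpoincare (mul hψ hs v)
  rw [toLp_mul] at hgap
  have hcut := norm_grad_mul_rpow_le hp hψ0 hψ1 hψ hδ hgrad hs hv
  linarith [(abs_le.1 herror).1]

theorem exists_eventually_norm_LpMul_tailCutoff_le (hp : 1 < p) (hc : c < lam) {R₀ : ℝ}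
    (hlam : ENNReal.ofReal lam ≤ lambda1p N p hp.le (Ω \ closure (ball 0 R₀)))
    {ι : Type*} {l : Filter ι} {v : ι → Sobolev10 N p Ω} (hv : ∀ i, ‖v i‖ ≤ 1)
    (hres : Tendsto (fun i => ‖eigenResidual hp (toLp Ω) (grad Ω) c (v i)‖) l (𝓝 0))
    {ε : ℝ} (hε : 0 < ε) :
    ∃ R, ∃ hR : 0 < R, ∀ᶠ i in l,
      ‖LpMul (isSobolevMultiplier_tailCutoff hR).memLp (toLp Ω (v i))‖ ≤ ε := by
  have hp0 : 0 < p := by linarith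
  obtain ⟨C, hC⟩ := exists_norm_gradient_tailCutoff_le (F := EucN N) hp0
  set κ := (lam - c) * ε ^ p / 2 with hκ
  have hκ0 : 0 < κ := by have := sub_pos.2 hc; positivity
  have hdecay (K : ℝ) : Tendsto (fun R : ℝ => K * (C / R)) atTop (𝓝 0) := by
    simpa using (tendsto_const_nhds (x := C)).div_atTop tendsto_id |>.const_mul K
  obtain ⟨R, hR₀, hR, hδ, hsmall⟩ := ((eventually_ge_atTop R₀).and <|
    (eventually_gt_atTop 0).and <| ((hdecay 1).eventually_le_const one_pos).and <|
    (hdecay (1 + p * 2 ^ (p - 1))).eventually_le_const hκ0).exists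
  refine ⟨R, hR, ?_⟩
  have hlim : Tendsto (fun i => ‖eigenResidual hp (toLp Ω) (grad Ω) c (v i)‖ * ‖mul (p := p)
      (isSobolevMultiplier_tailCutoff_rpow hp0 hR) (inter_subset_left (s := Ω))‖) l (𝓝 0) := by
    simpa using hres.mul_const _
  filter_upwards [hlim.eventually_le_const hκ0] with i hi
  have hloc := sub_mul_norm_LpMul_rpow_le (c := c) hp (tailCutoff_nonneg R) (tailCutoff_le_one R)
    (isSobolevMultiplier_tailCutoff hR) (isSobolevMultiplier_tailCutoff_rpow hp0 hR) (δ := C / R)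
    (by simpa using hδ) (fun x => (hC R hR x).1) (fun x => (hC R hR x).2)
    (inter_tsupport_tailCutoff_subset Ω hR hR₀)
    (mul_norm_toLp_rpow_le_of_le_lambda1p hp hlam) (hv i)
  have hdual := (le_abs_self _).trans ((eigenResidual hp (toLp Ω) (grad Ω) c (v i)).le_opNorm_of_le
    ((mul (isSobolevMultiplier_tailCutoff_rpow hp0 hR) (inter_subset_left (s := Ω))).le_opNorm_of_le
      (hv i)))
  rw [mul_one] at hdual
  refine (Real.rpow_le_rpow_iff (norm_nonneg _) hε.le hp0).1
    (le_of_mul_le_mul_left ?_ (sub_pos.2 hc))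
  linarith

end Sobolev10

end Tightness

theorem lintegral_enorm_rpow_le {α E : Type*} [MeasurableSpace α] [NormedAddCommGroup E]
    {μ : Measure α} [IsProbabilityMeasure μ] {p : ℝ} (hp : 1 ≤ p) {f : α → E}
    (hf : AEStronglyMeasurable f μ) : (∫⁻ x, ‖f x‖ₑ ∂μ) ^ p ≤ ∫⁻ x, ‖f x‖ₑ ^ p ∂μ := by
  have h := eLpNorm'_le_eLpNorm'_of_exponent_le one_pos hp μ hf
  simp only [eLpNorm', ENNReal.rpow_one, div_one, one_div] at h
  rwa [ENNReal.le_rpow_inv_iff (by linarith)] at h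

theorem setLIntegral_ball_le_setLIntegral_ball_two_mul {E : Type*} [NormedAddCommGroup E]
    [MeasurableSpace E] [BorelSpace E] {μ : Measure E} [μ.IsAddLeftInvariant] (g : E → ℝ≥0∞)
    {x y : E} {r : ℝ} (hx : x ∈ ball y r) :
    ∫⁻ z in ball y r, g z ∂μ ≤ ∫⁻ h in ball (0 : E) (2 * r), g (x + h) ∂μ := by
  rw [← lintegral_indicator measurableSet_ball, ← lintegral_indicator measurableSet_ball,
    ← lintegral_add_left_eq_self _ x]
  refine lintegral_mono fun h => indicator_apply_le' (fun hy => ?_) fun _ => zero_le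
  have hh : h ∈ ball (0 : E) (2 * r) := by
    rw [mem_ball_zero_iff]
    calc ‖h‖ = dist (x + h) x := by rw [dist_self_add_left]
      _ ≤ dist (x + h) y + dist x y := dist_triangle_right _ _ _
      _ < 2 * r := by linarith [mem_ball.1 hy, mem_ball.1 hx]
  exact (indicator_of_mem hh fun h => g (x + h)).ge

section LocalAverage

variable {E F : Type*} [NormedAddCommGroup E] [NormedSpace ℝ E] [NormedAddCommGroup F]
  [NormedSpace ℝ F] [CompleteSpace F] {p : ℝ} {f : E → F}

theorem enorm_add_sub_rpow_le (hp : 1 ≤ p) (hf : ContDiff ℝ 1 f) (x h : E) :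
    ‖f (x + h) - f x‖ₑ ^ p ≤
      ‖h‖ₑ ^ p * ∫⁻ t in Ioc (0 : ℝ) 1, ‖fderiv ℝ f (x + t • h)‖ₑ ^ p := by
  have hcont : Continuous fun t : ℝ => fderiv ℝ f (x + t • h) :=
    (hf.continuous_fderiv one_ne_zero).comp (by fun_prop)
  have hderiv (t : ℝ) :
      HasDerivAt (fun t : ℝ => f (x + t • h)) (fderiv ℝ f (x + t • h) h) t := by
    have hline : HasDerivAt (fun t : ℝ => x + t • h) h t := by
      simpa using ((hasDerivAt_id t).smul_const h).const_add x
    exact (hf.differentiable one_ne_zero _).hasFDerivAt.comp_hasDerivAt t hline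
  have hftc : f (x + h) - f x = ∫ t in Ioc (0 : ℝ) 1, fderiv ℝ f (x + t • h) h := by
    have hint : Continuous fun t : ℝ => fderiv ℝ f (x + t • h) h := by fun_prop
    rw [← intervalIntegral.integral_of_le zero_le_one,
      intervalIntegral.integral_eq_sub_of_hasDerivAt (fun t _ => hderiv t)
        (hint.intervalIntegrable _ _), one_smul, zero_smul, add_zero]
  have hprob : IsProbabilityMeasure (volume.restrict (Ioc (0 : ℝ) 1)) :=
    ⟨by simp⟩
  calc ‖f (x + h) - f x‖ₑ ^ p
      ≤ (‖h‖ₑ * ∫⁻ t in Ioc (0 : ℝ) 1, ‖fderiv ℝ f (x + t • h)‖ₑ) ^ p := by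
        gcongr
        rw [hftc, mul_comm, ← lintegral_mul_const' _ _ enorm_ne_top]
        exact (enorm_integral_le_lintegral_enorm _).trans
          (lintegral_mono fun t => ContinuousLinearMap.le_opENorm _ _)
    _ ≤ ‖h‖ₑ ^ p * ∫⁻ t in Ioc (0 : ℝ) 1, ‖fderiv ℝ f (x + t • h)‖ₑ ^ p := by
        rw [ENNReal.mul_rpow_of_nonneg _ _ (by linarith)]
        gcongr
        exact lintegral_enorm_rpow_le hp hcont.aestronglyMeasurable

variable [FiniteDimensional ℝ E] [MeasurableSpace E] [BorelSpace E] {μ : Measure E}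
  [μ.IsAddHaarMeasure]

theorem lintegral_enorm_add_sub_rpow_le (hp : 1 ≤ p) (hf : ContDiff ℝ 1 f) (h : E) :
    ∫⁻ x, ‖f (x + h) - f x‖ₑ ^ p ∂μ ≤ ‖h‖ₑ ^ p * ∫⁻ x, ‖fderiv ℝ f x‖ₑ ^ p ∂μ := by
  have hmeas : Measurable fun z : E × ℝ => ‖fderiv ℝ f (z.1 + z.2 • h)‖ₑ ^ p := by
    have : Continuous fun z : E × ℝ => fderiv ℝ f (z.1 + z.2 • h) :=
      (hf.continuous_fderiv one_ne_zero).comp (by fun_prop)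
    exact (this.enorm.measurable).pow_const p
  calc ∫⁻ x, ‖f (x + h) - f x‖ₑ ^ p ∂μ
      ≤ ∫⁻ x, ‖h‖ₑ ^ p * (∫⁻ t in Ioc (0 : ℝ) 1, ‖fderiv ℝ f (x + t • h)‖ₑ ^ p) ∂μ :=
        lintegral_mono fun x => enorm_add_sub_rpow_le hp hf x h
    _ = ‖h‖ₑ ^ p * ∫⁻ t in Ioc (0 : ℝ) 1, ∫⁻ x, ‖fderiv ℝ f (x + t • h)‖ₑ ^ p ∂μ := by
        rw [lintegral_const_mul _ hmeas.lintegral_prod_right',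
          lintegral_lintegral_swap hmeas.aemeasurable]
    _ = ‖h‖ₑ ^ p * ∫⁻ x, ‖fderiv ℝ f x‖ₑ ^ p ∂μ := by
        simp_rw [lintegral_add_right_eq_self (fun x => ‖fderiv ℝ f x‖ₑ ^ p)]
        simp

theorem lintegral_ball_enorm_add_sub_rpow_le (hp : 1 ≤ p) (hf : ContDiff ℝ 1 f) (r : ℝ) :
    ∫⁻ x, ∫⁻ h in ball (0 : E) r, ‖f (x + h) - f x‖ₑ ^ p ∂μ ∂μ ≤
      μ (ball (0 : E) r) * ENNReal.ofReal r ^ p * ∫⁻ x, ‖fderiv ℝ f x‖ₑ ^ p ∂μ := by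
  have hcont : Continuous fun z : E × E => f (z.1 + z.2) - f z.1 :=
    (hf.continuous.comp (by fun_prop)).sub (hf.continuous.comp (by fun_prop))
  rw [lintegral_lintegral_swap (hcont.enorm.measurable.pow_const p).aemeasurable, mul_assoc,
    mul_comm, ← setLIntegral_const]
  refine setLIntegral_mono' measurableSet_ball fun h hh => ?_
  refine (lintegral_enorm_add_sub_rpow_le hp hf h).trans ?_
  gcongr
  rw [← ofReal_norm]
  exact ENNReal.ofReal_le_ofReal (mem_ball_zero_iff.1 hh).le

theorem enorm_sub_setAverage_ball_rpow_le (hp : 1 ≤ p) (hf : Continuous f) {x y : E} {r : ℝ}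
    (hx : x ∈ ball y r) :
    ‖f x - ⨍ z in ball y r, f z ∂μ‖ₑ ^ p ≤
      (μ (ball (0 : E) r))⁻¹ * ∫⁻ h in ball (0 : E) (2 * r), ‖f (x + h) - f x‖ₑ ^ p ∂μ := by
  have hr : 0 < r := pos_of_mem_ball hx
  set ν := ((μ.restrict (ball y r)) univ)⁻¹ • μ.restrict (ball y r) with hν
  have hν_univ : (μ.restrict (ball y r)) univ = μ (ball (0 : E) r) := by
    rw [Measure.restrict_apply_univ, Measure.addHaar_ball_center]
  have hprob : IsProbabilityMeasure ν := by
    have : NeZero (μ.restrict (ball y r)) :=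
      ⟨fun h => (measure_ball_pos μ y hr).ne' (Measure.restrict_eq_zero.1 h)⟩
    have : IsFiniteMeasure (μ.restrict (ball y r)) := ⟨by simpa using measure_ball_lt_top⟩
    infer_instance
  have hint : Integrable f ν :=
    ((hf.continuousOn.integrableOn_compact (isCompact_closedBall y r)).mono_set
      ball_subset_closedBall).to_average
  have havg : f x - ⨍ z in ball y r, f z ∂μ = ∫ z, (f x - f z) ∂ν := by
    rw [integral_sub (integrable_const _) hint, integral_const, probReal_univ, one_smul]
    rfl
  calc ‖f x - ⨍ z in ball y r, f z ∂μ‖ₑ ^ p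
      ≤ (∫⁻ z, ‖f x - f z‖ₑ ∂ν) ^ p := by
        rw [havg]
        gcongr
        exact enorm_integral_le_lintegral_enorm _
    _ ≤ ∫⁻ z, ‖f x - f z‖ₑ ^ p ∂ν :=
        lintegral_enorm_rpow_le hp (continuous_const.sub hf).aestronglyMeasurable
    _ ≤ _ := by
        rw [hν, lintegral_smul_measure, hν_univ, smul_eq_mul]
        simp only [← edist_eq_enorm_sub, edist_comm (f x)]
        refine mul_le_mul_right ?_ _
        exact setLIntegral_ball_le_setLIntegral_ball_two_mul (fun z => edist (f z) (f x) ^ p) hx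

theorem setLIntegral_enorm_sub_setAverage_ball_rpow_le (hp : 1 ≤ p) (hf : ContDiff ℝ 1 f)
    {K : Set E} (hK : MeasurableSet K) {σ : E → E} {r : ℝ} (hr : 0 < r)
    (hσ : ∀ x ∈ K, x ∈ ball (σ x) r) :
    ∫⁻ x in K, ‖f x - ⨍ z in ball (σ x) r, f z ∂μ‖ₑ ^ p ∂μ ≤
      2 ^ Module.finrank ℝ E * ENNReal.ofReal (2 * r) ^ p * ∫⁻ x, ‖fderiv ℝ f x‖ₑ ^ p ∂μ := by
  set m := μ (ball (0 : E) r)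
  have hm0 : m ≠ 0 := (measure_ball_pos μ 0 hr).ne'
  have hm_top : m ≠ ∞ := measure_ball_lt_top.ne
  have hdouble : μ (ball (0 : E) (2 * r)) = 2 ^ Module.finrank ℝ E * m := by
    rw [Measure.addHaar_ball_mul_of_pos μ 0 two_pos, ENNReal.ofReal_pow zero_le_two,
      ENNReal.ofReal_ofNat]
  calc ∫⁻ x in K, ‖f x - ⨍ z in ball (σ x) r, f z ∂μ‖ₑ ^ p ∂μ
      ≤ ∫⁻ x in K, m⁻¹ * ∫⁻ h in ball (0 : E) (2 * r), ‖f (x + h) - f x‖ₑ ^ p ∂μ ∂μ :=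
        setLIntegral_mono' hK fun x hx =>
          enorm_sub_setAverage_ball_rpow_le hp hf.continuous (hσ x hx)
    _ ≤ m⁻¹ * ∫⁻ x, ∫⁻ h in ball (0 : E) (2 * r), ‖f (x + h) - f x‖ₑ ^ p ∂μ ∂μ := by
        rw [lintegral_const_mul' _ _ (ENNReal.inv_ne_top.2 hm0)]
        exact mul_le_mul_right (setLIntegral_le_lintegral _ _) _
    _ ≤ m⁻¹ * (2 ^ Module.finrank ℝ E * m * ENNReal.ofReal (2 * r) ^ p *
          ∫⁻ x, ‖fderiv ℝ f x‖ₑ ^ p ∂μ) := by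
        rw [← hdouble]
        exact mul_le_mul_right (lintegral_ball_enorm_add_sub_rpow_le hp hf _) _
    _ = m⁻¹ * m * (2 ^ Module.finrank ℝ E * ENNReal.ofReal (2 * r) ^ p *
          ∫⁻ x, ‖fderiv ℝ f x‖ₑ ^ p ∂μ) := by ring
    _ = _ := by rw [ENNReal.inv_mul_cancel hm0 hm_top, one_mul]

end LocalAverage

theorem isCompactOperator_of_forall_exists_norm_sub_lt {X Y : Type*} [NormedAddCommGroup X]
    [NormedSpace ℝ X] [NormedAddCommGroup Y] [NormedSpace ℝ Y] [CompleteSpace Y] {T : X →L[ℝ] Y}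
    (h : ∀ ε > 0, ∃ S : X →L[ℝ] Y, IsCompactOperator S ∧ ‖T - S‖ < ε) : IsCompactOperator T := by
  have hclosed : IsClosed {S : X →L[ℝ] Y | IsCompactOperator S} :=
    isClosed_setOfPred_isCompactOperator
  refine hclosed.closure_subset (Metric.mem_closure_iff.2 fun ε hε => ?_)
  obtain ⟨S, hS, hTS⟩ := h ε hε
  exact ⟨S, hS, by rwa [dist_eq_norm]⟩

theorem exists_simpleFunc_mem_ball_of_isCompact {X : Type*} [PseudoMetricSpace X]
    [TopologicalSpace.SeparableSpace X] [Nonempty X] [MeasurableSpace X] [OpensMeasurableSpace X]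
    {K : Set X} (hK : IsCompact K) {r : ℝ} (hr : 0 < r) :
    ∃ σ : SimpleFunc X X, ∀ x ∈ K, x ∈ ball (σ x) r := by
  set e := TopologicalSpace.denseSeq X
  obtain ⟨n, hn⟩ := hK.elim_directed_cover (fun n => ⋃ k ≤ n, ball (e k) r)
    (fun n => isOpen_biUnion fun _ _ => isOpen_ball)
    (fun x _ => by
      obtain ⟨k, hk⟩ := (TopologicalSpace.denseRange_denseSeq X).exists_dist_lt x hr
      exact mem_iUnion.2 ⟨k, mem_iUnion₂.2 ⟨k, le_rfl, hk⟩⟩)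
    (directed_of_isDirected_le fun m n hmn => biUnion_mono (fun k (hk : k ≤ m) => hk.trans hmn)
      fun _ _ => le_rfl)
  refine ⟨SimpleFunc.nearestPt e n, fun x hx => ?_⟩
  obtain ⟨k, hk, hxk⟩ := mem_iUnion₂.1 (hn hx)
  rw [mem_ball', ← edist_lt_ofReal]
  exact (SimpleFunc.edist_nearestPt_le e x hk).trans_lt (edist_lt_ofReal.2 (mem_ball'.1 hxk))

theorem ofReal_Lp_norm_rpow_eq_lintegral {α E : Type*} [MeasurableSpace α] {μ : Measure α}
    [NormedAddCommGroup E] {p : ℝ} (hp : 0 < p) (f : Lp E (ENNReal.ofReal p) μ) :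
    ENNReal.ofReal (‖f‖ ^ p) = ∫⁻ x, ‖f x‖ₑ ^ p ∂μ := by
  rw [Lp_norm_rpow_eq_integral hp,
    ofReal_integral_eq_lintegral_ofReal (integrable_norm_rpow_of_Lp hp f)
      (ae_of_all _ fun x => Real.rpow_nonneg (norm_nonneg _) p)]
  exact lintegral_congr fun x => by
    rw [← ofReal_norm, ENNReal.ofReal_rpow_of_nonneg (norm_nonneg _) hp.le]

theorem ofReal_Lp_norm_rpow_eq_setLIntegral {α E : Type*} [MeasurableSpace α] {μ : Measure α}
    [NormedAddCommGroup E] {p : ℝ} (hp : 0 < p) {s : Set α} (hs : MeasurableSet s)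
    {f : Lp E (ENNReal.ofReal p) μ} {g : α → E} (h : f =ᵐ[μ] s.indicator g) :
    ENNReal.ofReal (‖f‖ ^ p) = ∫⁻ x in s, ‖g x‖ₑ ^ p ∂μ := by
  rw [ofReal_Lp_norm_rpow_eq_lintegral hp, ← lintegral_indicator hs]
  refine lintegral_congr_ae (h.mono fun x hx => ?_)
  simp only [hx]
  by_cases hxs : x ∈ s <;> simp [hxs, hp]

section Rellich

variable {N : ℕ} {p : ℝ} [Fact (1 ≤ ENNReal.ofReal p)] {K : Set (EucN N)}

/-- The average over a ball, as a continuous functional on `L^p`. -/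
def ballAverage (hp : 1 < p) (y : EucN N) (r : ℝ) :
    StrongDual ℝ (Lp ℝ (ENNReal.ofReal p) (volume : Measure (EucN N))) :=
  (volume.real (ball y r))⁻¹ • LpDuality hp
    (indicatorConstLp (ENNReal.ofReal p) measurableSet_ball
      (measure_ball_lt_top (x := y) (r := r)).ne 1)

theorem ballAverage_apply (hp : 1 < p) (y : EucN N) (r : ℝ)
    (f : Lp ℝ (ENNReal.ofReal p) (volume : Measure (EucN N))) :
    ballAverage hp y r f = ⨍ z in ball y r, f z := by
  rw [ballAverage, smul_apply, LpDuality_apply, setAverage_eq, ← integral_indicator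
    measurableSet_ball]
  congr 1
  refine integral_congr_ae ?_
  filter_upwards [indicatorConstLp_coeFn (p := ENNReal.ofReal p) (hs := measurableSet_ball)
    (hμs := (measure_ball_lt_top (x := y) (r := r)).ne) (c := (1 : ℝ))] with x hx
  rw [hx]
  by_cases h : x ∈ ball y r <;> simp [h, dualityMap]

/-- The finite-rank operator replacing `f` on `K` by `x ↦ ⨍ z in ball (σ x) r, f z`, and by `0`
outside `K`. -/
def cellAverage (hp : 1 < p) (hK : MeasurableSet K) (hK_fin : volume K ≠ ∞)
    (σ : SimpleFunc (EucN N) (EucN N)) (r : ℝ) :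
    Lp ℝ (ENNReal.ofReal p) (volume : Measure (EucN N)) →L[ℝ]
      Lp ℝ (ENNReal.ofReal p) (volume : Measure (EucN N)) :=
  ∑ y ∈ σ.range, (ballAverage hp y r).smulRight (indicatorConstLp (ENNReal.ofReal p)
    ((σ.measurableSet_fiber y).inter hK) (measure_ne_top_of_subset inter_subset_right hK_fin) 1)

theorem coeFn_cellAverage (hp : 1 < p) (hK : MeasurableSet K) (hK_fin : volume K ≠ ∞)
    (σ : SimpleFunc (EucN N) (EucN N)) (r : ℝ)
    (f : Lp ℝ (ENNReal.ofReal p) (volume : Measure (EucN N))) :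
    cellAverage hp hK hK_fin σ r f =ᵐ[volume]
      K.indicator fun x => ⨍ z in ball (σ x) r, f z := by
  let cell (y : EucN N) := indicatorConstLp (ENNReal.ofReal p)
    ((σ.measurableSet_fiber y).inter hK)
    (measure_ne_top_of_subset inter_subset_right hK_fin) (1 : ℝ)
  simp only [cellAverage, sum_apply, ContinuousLinearMap.smulRight_apply]
  filter_upwards [Lp.coeFn_fun_finsetSum σ.range fun y => ballAverage hp y r f • cell y,
    (Filter.eventually_all_finset σ.range).2 fun y _ =>
      Lp.coeFn_smul (ballAverage hp y r f) (cell y),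
    (Filter.eventually_all_finset σ.range).2 fun y _ =>
      (indicatorConstLp_coeFn : cell y =ᵐ[volume] _)] with x hsum hsmul hind
  rw [hsum, Finset.sum_eq_single_of_mem (σ x) (σ.mem_range_self x) fun y hy hne => ?_]
  · rw [hsmul _ (σ.mem_range_self x), Pi.smul_apply, hind _ (σ.mem_range_self x),
      ballAverage_apply, smul_eq_mul]
    by_cases hx : x ∈ K <;> simp [hx]
  · rw [hsmul y hy, Pi.smul_apply, hind y hy, indicator_of_notMem, smul_zero]
    exact fun hx => hne hx.1.symm

theorem isCompactOperator_cellAverage (hp : 1 < p) (hK : MeasurableSet K) (hK_fin : volume K ≠ ∞)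
    (σ : SimpleFunc (EucN N) (EucN N)) (r : ℝ) :
    IsCompactOperator (cellAverage hp hK hK_fin σ r) := by
  refine Finset.sum_induction _ (fun T : _ →L[ℝ] _ => IsCompactOperator T)
    (fun _ _ => IsCompactOperator.add) isCompactOperator_zero fun y _ => ?_
  exact (isCompactOperator_of_locallyCompactSpace_rng
    (ContinuousLinearMap.toSpanSingleton ℝ _)).comp_clm (ballAverage hp y r)

variable {Ω : Set (EucN N)}

namespace Sobolev10

theorem norm_LpIndicator_sub_cellAverage_rpow_le (hp : 1 < p) (hK : MeasurableSet K)
    (hK_fin : volume K ≠ ∞) {σ : SimpleFunc (EucN N) (EucN N)} {r : ℝ} (hr : 0 < r)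
    (hσ : ∀ x ∈ K, x ∈ ball (σ x) r) (w : Sobolev10 N p Ω) :
    ‖LpIndicator hK (toLp Ω w) - cellAverage hp hK hK_fin σ r (toLp Ω w)‖ ^ p ≤
      2 ^ N * (2 * r) ^ p * ‖grad Ω w‖ ^ p := by
  have hp0 : 0 < p := by linarith
  refine closure_minimal (t := {z : SobPair N (ENNReal.ofReal p) |
    ‖LpIndicator hK z.1 - cellAverage hp hK hK_fin σ r z.1‖ ^ p ≤
      2 ^ N * (2 * r) ^ p * ‖z.2‖ ^ p}) ?_
    (isClosed_le (by fun_prop (disch := simp [hp0.le])) (by fun_prop (disch := simp [hp0.le]))) w.2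
  rintro z ⟨f, hf, hzf, hzg⟩
  have hdiff : LpIndicator hK z.1 - cellAverage hp hK hK_fin σ r z.1 =ᵐ[volume]
      K.indicator fun x => f x - ⨍ t in ball (σ x) r, f t := by
    have havg (y : EucN N) : ⨍ t in ball y r, z.1 t = ⨍ t in ball y r, f t := by
      rw [setAverage_eq, setAverage_eq, integral_congr_ae (ae_restrict_of_ae hzf)]
    filter_upwards [Lp.coeFn_sub (LpIndicator hK z.1) (cellAverage hp hK hK_fin σ r z.1),
      coeFn_LpIndicator hK z.1, coeFn_cellAverage hp hK hK_fin σ r z.1, hzf] with x h1 h2 h3 h4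
    rw [h1, Pi.sub_apply, h2, h3]
    by_cases hx : x ∈ K <;> simp [hx, h4, havg]
  have hgrad : ENNReal.ofReal (‖z.2‖ ^ p) = ∫⁻ x, ‖fderiv ℝ f x‖ₑ ^ p := by
    rw [ofReal_Lp_norm_rpow_eq_lintegral hp0]
    refine lintegral_congr_ae (hzg.mono fun x hx => ?_)
    simp only [hx, ← ofReal_norm, norm_gradient]
  have hbound := setLIntegral_enorm_sub_setAverage_ball_rpow_le (μ := volume) hp.le
    (hf.1.of_le (by exact_mod_cast le_top)) hK hr hσ
  rw [← ofReal_Lp_norm_rpow_eq_setLIntegral hp0 hK hdiff, ← hgrad,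
    finrank_euclideanSpace_fin] at hbound
  refine (ENNReal.ofReal_le_ofReal_iff (by positivity)).1 (hbound.trans_eq ?_)
  rw [ENNReal.ofReal_mul (q := ‖z.2‖ ^ p) (by positivity),
    ENNReal.ofReal_mul (p := 2 ^ N) (by positivity),
    ENNReal.ofReal_pow zero_le_two, ENNReal.ofReal_ofNat,
    ENNReal.ofReal_rpow_of_pos (by positivity)]

theorem norm_LpIndicator_comp_toLp_sub_cellAverage_le (hp : 1 < p) (hK : MeasurableSet K)
    (hK_fin : volume K ≠ ∞) {σ : SimpleFunc (EucN N) (EucN N)} {r : ℝ} (hr : 0 < r)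
    (hσ : ∀ x ∈ K, x ∈ ball (σ x) r) :
    ‖(LpIndicator hK).comp (toLp Ω) - (cellAverage hp hK hK_fin σ r).comp (toLp Ω)‖ ≤
      (2 ^ N * (2 * r) ^ p) ^ p⁻¹ := by
  have hp0 : 0 < p := by linarith
  refine ContinuousLinearMap.opNorm_le_bound _ (by positivity) fun w => ?_
  rw [← Real.rpow_le_rpow_iff (norm_nonneg _) (by positivity) hp0,
    Real.mul_rpow (by positivity) (norm_nonneg _), Real.rpow_inv_rpow (by positivity) hp0.ne']
  refine (norm_LpIndicator_sub_cellAverage_rpow_le hp hK hK_fin hr hσ w).trans ?_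
  gcongr
  exact norm_grad_le w

theorem isCompactOperator_LpIndicator_comp_toLp (hp : 1 < p) (hK : IsCompact K) :
    IsCompactOperator ((LpIndicator hK.measurableSet).comp (toLp (p := p) Ω)) := by
  have hp0 : 0 < p := by linarith
  have hlim : Tendsto (fun r : ℝ => ((2 : ℝ) ^ N * (2 * r) ^ p) ^ p⁻¹) (𝓝[>] 0) (𝓝 0) := by
    have hcont : Continuous fun r : ℝ => ((2 : ℝ) ^ N * (2 * r) ^ p) ^ p⁻¹ := by
      fun_prop (disch := simp [hp0.le])
    simpa [Real.zero_rpow, hp0.ne'] using (hcont.tendsto 0).mono_left nhdsWithin_le_nhds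
  refine isCompactOperator_of_forall_exists_norm_sub_lt fun ε hε => ?_
  obtain ⟨r, hr_lt, hr⟩ := ((hlim.eventually_lt_const hε).and self_mem_nhdsWithin).exists
  obtain ⟨σ, hσ⟩ := exists_simpleFunc_mem_ball_of_isCompact hK hr
  exact ⟨_, (isCompactOperator_cellAverage hp hK.measurableSet hK.measure_lt_top.ne σ r).comp_clm
    (toLp Ω), (norm_LpIndicator_comp_toLp_sub_cellAverage_le hp _ _ hr hσ).trans_lt hr_lt⟩

end Sobolev10

end Rellich

theorem cauchy_map_of_forall_exists_dist_le {ι X : Type*} [PseudoMetricSpace X] {l : Filter ι}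
    [l.NeBot] {f : ι → X}
    (h : ∀ ε > 0, ∃ g : ι → X, Cauchy (map g l) ∧ ∀ᶠ i in l, dist (f i) (g i) ≤ ε) :
    Cauchy (map f l) := by
  refine Metric.cauchy_iff.2 ⟨inferInstance, fun ε hε => ?_⟩
  obtain ⟨g, hg, hfg⟩ := h (ε / 4) (by positivity)
  obtain ⟨t, ht, hgt⟩ := (Metric.cauchy_iff.1 hg).2 (ε / 4) (by positivity)
  refine ⟨f '' (g ⁻¹' t ∩ {i | dist (f i) (g i) ≤ ε / 4}),
    image_mem_map (inter_mem ht hfg), ?_⟩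
  rintro _ ⟨i, ⟨hi, hfi⟩, rfl⟩ _ ⟨j, ⟨hj, hfj⟩, rfl⟩
  have hij := hgt _ hi _ hj
  have htri := dist_triangle4_right (f i) (f j) (g i) (g j)
  linarith [hfi.out, hfj.out]

theorem cauchy_map_of_isCompactOperator_of_norm_le {ι X Y : Type*} [NormedAddCommGroup X]
    [NormedSpace ℝ X] [NormedAddCommGroup Y] [NormedSpace ℝ Y] {T : X →L[ℝ] Y}
    (hT : IsCompactOperator T) (U : Ultrafilter ι) {x : ι → X} {M : ℝ} (hx : ∀ i, ‖x i‖ ≤ M) :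
    Cauchy (map (fun i => T (x i)) U) := by
  obtain ⟨K, hK, hTK⟩ := hT.image_closedBall_subset_compact M
  have hmem : K ∈ U.map fun i => T (x i) := Ultrafilter.mem_map.2 (univ_mem' fun i =>
    hTK (mem_image_of_mem _ (mem_closedBall_zero_iff.2 (hx i))))
  obtain ⟨y, -, hy⟩ := hK.ultrafilter_le_nhds _ (le_principal_iff.2 hmem)
  exact cauchy_nhds.mono hy

theorem Sobolev10.exists_tendsto_toLp_of_eigenResidual {ι : Type*} {N : ℕ} {p : ℝ}
    [Fact (1 ≤ ENNReal.ofReal p)] {Ω : Set (EucN N)} (hp : 1 < p) {c lam R₀ : ℝ} (hc : c < lam)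
    (hlam : ENNReal.ofReal lam ≤ lambda1p N p hp.le (Ω \ closure (ball 0 R₀)))
    (U : Ultrafilter ι) {v : ι → Sobolev10 N p Ω} (hv : ∀ i, ‖v i‖ ≤ 1)
    (hres : Tendsto (fun i => ‖eigenResidual hp (toLp Ω) (grad Ω) c (v i)‖) U (𝓝 0)) :
    ∃ f, Tendsto (fun i => toLp Ω (v i)) U (𝓝 f) := by
  refine CompleteSpace.complete (cauchy_map_of_forall_exists_dist_le fun ε hε => ?_)
  obtain ⟨R, hR, htail⟩ := exists_eventually_norm_LpMul_tailCutoff_le hp hc hlam hv hres hε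
  have hK : IsCompact (closedBall (0 : EucN N) (3 * R)) := isCompact_closedBall 0 _
  refine ⟨fun i => LpIndicator hK.measurableSet (toLp Ω (v i)),
    cauchy_map_of_isCompactOperator_of_norm_le
      (isCompactOperator_LpIndicator_comp_toLp hp hK) U hv,
    htail.mono fun i hi => ?_⟩
  rw [dist_eq_norm]
  refine (norm_sub_LpIndicator_le hK.measurableSet _ (fun x hx => ?_) _).trans hi
  exact tailCutoff_eq_one hR (not_le.1 (mt mem_closedBall_zero_iff.2 hx)).le

section InverseIteration

variable {α : Type*} [MeasurableSpace α] {μ : Measure α} {E F : Type*} [NormedAddCommGroup E]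
  [InnerProductSpace ℝ E] [NormedAddCommGroup F] [InnerProductSpace ℝ F] {p : ℝ}
  [Fact (1 ≤ ENNReal.ofReal p)] {Y : Type*} [NormedAddCommGroup Y] [NormedSpace ℝ Y]
  [UniformConvexSpace Y] [CompleteSpace Y] {T : Y →L[ℝ] Lp E (ENNReal.ofReal p) μ}
  {G : Y →L[ℝ] Lp F (ENNReal.ofReal p) μ}

/-- One step of inverse iteration for the quotient `‖y‖ / ‖T y‖`: the unit vector maximizing
`pullbackDuality hp T f`. For the inclusion of `W^{1,p}_0` in `L^p` it solves
`-Δ_p v + |v| ^ (p - 2) v = t |f| ^ (p - 2) f` for some `t > 0`. -/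
def inverseIterate (hp : 1 < p) (T : Y →L[ℝ] Lp E (ENNReal.ofReal p) μ)
    (f : Lp E (ENNReal.ofReal p) μ) : Y :=
  normingVector (pullbackDuality hp T f)

theorem inverseIterate_neg (hp : 1 < p) {f : Lp E (ENNReal.ofReal p) μ}
    (hf : pullbackDuality hp T f ≠ 0) : inverseIterate hp T (-f) = -inverseIterate hp T f := by
  rw [inverseIterate, pullbackDuality_neg, normingVector_neg hf, inverseIterate]

theorem continuousAt_inverseIterate [FiniteDimensional ℝ E] (hp : 1 < p)
    {f : Lp E (ENNReal.ofReal p) μ} (hf : pullbackDuality hp T f ≠ 0) :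
    ContinuousAt (inverseIterate hp T) f :=
  (continuousAt_normingVector hf).comp (continuous_pullbackDuality hp).continuousAt

theorem norm_pullbackDuality_le_norm_apply_inverseIterate (hp : 1 < p)
    {f : Lp E (ENNReal.ofReal p) μ} (hf : ‖f‖ = 1) :
    ‖pullbackDuality hp T f‖ ≤ ‖T (inverseIterate hp T f)‖ := by
  rw [← apply_normingVector]
  exact (le_abs_self _).trans (abs_pullbackDuality_apply_le hp hf.le _)

theorem apply_inverseIterate_ne_zero (hp : 1 < p) {y : Y} (hy : ‖T y‖ = 1) :
    T (inverseIterate hp T (T y)) ≠ 0 := norm_pos_iff.1 <|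
  (norm_pos_iff.2 (pullbackDuality_ne_zero hp hy)).trans_le
    (norm_pullbackDuality_le_norm_apply_inverseIterate hp hy)

theorem inv_norm_apply_inverseIterate_le (hp : 1 < p) {y : Y} (hy : ‖T y‖ = 1) :
    ‖T (inverseIterate hp T (T y))‖⁻¹ ≤ ‖y‖ := by
  have hy0 : y ≠ 0 := fun h => by simp [h] at hy
  exact inv_le_of_inv_le₀ (norm_pos_iff.2 hy0) ((inv_norm_le_norm_pullbackDuality hp hy).trans
    (norm_pullbackDuality_le_norm_apply_inverseIterate hp hy))

/-- The multiple of the inverse iterate on which `‖T ·‖ = 1`. -/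
def normalizedInverseIterate (hp : 1 < p) (T : Y →L[ℝ] Lp E (ENNReal.ofReal p) μ)
    (f : Lp E (ENNReal.ofReal p) μ) : Y :=
  ‖T (inverseIterate hp T f)‖⁻¹ • inverseIterate hp T f

theorem normalizedInverseIterate_neg (hp : 1 < p) {f : Lp E (ENNReal.ofReal p) μ}
    (hf : pullbackDuality hp T f ≠ 0) :
    normalizedInverseIterate hp T (-f) = -normalizedInverseIterate hp T f := by
  rw [normalizedInverseIterate, inverseIterate_neg hp hf, map_neg, norm_neg, smul_neg,
    normalizedInverseIterate]

theorem norm_apply_normalizedInverseIterate (hp : 1 < p) {y : Y} (hy : ‖T y‖ = 1) :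
    ‖T (normalizedInverseIterate hp T (T y))‖ = 1 := by
  rw [normalizedInverseIterate, map_smul, norm_smul, norm_inv, norm_norm,
    inv_mul_cancel₀ (norm_ne_zero_iff.2 (apply_inverseIterate_ne_zero hp hy))]

theorem norm_normalizedInverseIterate (hp : 1 < p) {f : Lp E (ENNReal.ofReal p) μ}
    (hf : pullbackDuality hp T f ≠ 0) :
    ‖normalizedInverseIterate hp T f‖ = ‖T (inverseIterate hp T f)‖⁻¹ := by
  rw [normalizedInverseIterate, norm_smul, norm_inv, norm_norm, inverseIterate,
    norm_normingVector hf, mul_one]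

theorem continuousAt_normalizedInverseIterate [FiniteDimensional ℝ E] (hp : 1 < p) {y : Y}
    (hy : ‖T y‖ = 1) : ContinuousAt (normalizedInverseIterate hp T) (T y) :=
  have hv := continuousAt_inverseIterate hp (pullbackDuality_ne_zero hp hy)
  ((T.continuous.continuousAt.comp hv).norm.inv₀
    (norm_ne_zero_iff.2 (apply_inverseIterate_ne_zero hp hy))).smul hv

variable {ι : Type*} {l : Filter ι} {y : ι → Y} {β : ℝ}

theorem tendsto_norm_pullbackDuality (hp : 1 < p) (hβ : 0 < β) (hTy : ∀ i, ‖T (y i)‖ = 1)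
    (hy : Tendsto (fun i => ‖y i‖) l (𝓝 β))
    (hβ_le : ∀ i, β ≤ ‖T (inverseIterate hp T (T (y i)))‖⁻¹) :
    Tendsto (fun i => ‖pullbackDuality hp T (T (y i))‖) l (𝓝 β⁻¹) := by
  refine tendsto_of_tendsto_of_tendsto_of_le_of_le (hy.inv₀ hβ.ne') tendsto_const_nhds
    (fun i => inv_norm_le_norm_pullbackDuality hp (hTy i)) fun i => ?_
  exact (norm_pullbackDuality_le_norm_apply_inverseIterate hp (hTy i)).trans
    (le_inv_of_le_inv₀ hβ (hβ_le i))

theorem tendsto_sub_smul_inverseIterate (hp : 1 < p) (hβ : 0 < β) (hTy : ∀ i, ‖T (y i)‖ = 1)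
    (hy : Tendsto (fun i => ‖y i‖) l (𝓝 β))
    (hβ_le : ∀ i, β ≤ ‖T (inverseIterate hp T (T (y i)))‖⁻¹) :
    Tendsto (fun i => y i - β • inverseIterate hp T (T (y i))) l (𝓝 0) := by
  set L := fun i => pullbackDuality hp T (T (y i))
  set v := fun i => inverseIterate hp T (T (y i))
  have hL : Tendsto (fun i => ‖L i‖) l (𝓝 β⁻¹) := tendsto_norm_pullbackDuality hp hβ hTy hy hβ_le
  have hv (i) : ‖v i‖ ≤ 1 := norm_normingVector_le_one _
  have hy0 (i) : ‖y i‖ ≠ 0 := fun h => by simpa [norm_eq_zero.1 h] using hTy i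
  have hunit : Tendsto (fun i => ‖y i‖⁻¹ • y i - v i) l (𝓝 0) := by
    refine tendsto_sub_zero_of_tendsto_apply (inv_pos.2 hβ)
      (fun i => by rw [norm_smul, norm_inv, norm_norm, inv_mul_cancel₀ (hy0 i)]) hv hL ?_ ?_
    · simp only [map_smul, L, pullbackDuality_apply_self hp (hTy _), smul_eq_mul, mul_one]
      exact hy.inv₀ hβ.ne'
    · simp only [L, v, inverseIterate, apply_normingVector]
      exact hL
  have hscale : Tendsto (fun i => (‖y i‖ - β) • v i) l (𝓝 0) :=
    (tendsto_sub_nhds_zero_iff.2 hy).zero_smul_isBoundedUnder_le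
      (isBoundedUnder_of ⟨1, hv⟩)
  have hsum := (hy.smul hunit).add hscale
  simp only [smul_zero, add_zero] at hsum
  refine hsum.congr fun i => ?_
  rw [smul_sub, smul_inv_smul₀ (hy0 i), sub_smul]
  abel

theorem tendsto_pullbackDuality_sub_smul [FiniteDimensional ℝ E] (hp : 1 < p) (hβ : 0 < β)
    (hTy : ∀ i, ‖T (y i)‖ = 1) (hy : Tendsto (fun i => ‖y i‖) l (𝓝 β))
    (hβ_le : ∀ i, β ≤ ‖T (inverseIterate hp T (T (y i)))‖⁻¹) :
    Tendsto (fun i => pullbackDuality hp T (T (y i)) -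
      β ^ (p - 1) • pullbackDuality hp T (T (inverseIterate hp T (T (y i))))) l (𝓝 0) := by
  have hsub : Tendsto (fun i => T (y i) - β • T (inverseIterate hp T (T (y i)))) l (𝓝 0) := by
    simpa [Function.comp_def] using (T.continuous.tendsto 0).comp
      (tendsto_sub_smul_inverseIterate hp hβ hTy hy hβ_le)
  have hnorm (i) : ‖β • T (inverseIterate hp T (T (y i)))‖ ≤ 1 := by
    have hTv : 0 < ‖T (inverseIterate hp T (T (y i)))‖ := inv_pos.1 (hβ.trans_le (hβ_le i))
    rw [norm_smul, Real.norm_of_nonneg hβ.le]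
    exact (mul_le_mul_of_nonneg_right (hβ_le i) hTv.le).trans_eq (inv_mul_cancel₀ hTv.ne')
  have hdual := tendsto_LpDuality_sub hp (.of_forall fun i => (hTy i).le) (.of_forall hnorm) hsub
  have hcomp := ((ContinuousLinearMap.precomp ℝ T).continuous.tendsto 0).comp hdual
  simpa [Function.comp_def, LpDuality_smul_of_pos hp hβ, pullbackDuality] using hcomp

theorem pullbackDuality_eq_smul_add (hp : 1 < p) (hY : ∀ y : Y, ‖y‖ ^ p = ‖T y‖ ^ p + ‖G y‖ ^ p)
    {f : Lp E (ENNReal.ofReal p) μ} (hf : pullbackDuality hp T f ≠ 0) :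
    pullbackDuality hp T f = ‖pullbackDuality hp T f‖ •
      (pullbackDuality hp T (T (inverseIterate hp T f)) +
        pullbackDuality hp G (G (inverseIterate hp T f))) := by
  ext φ
  set v := inverseIterate hp T f
  have hd : HasDerivAt (fun t : ℝ => ‖v + t • φ‖ ^ p)
      (p * (pullbackDuality hp T (T v) φ + pullbackDuality hp G (G v) φ)) 0 := by
    simp only [hY, map_add, map_smul, mul_add]
    exact (hasDerivAt_Lp_norm_add_smul_rpow hp _ _).add (hasDerivAt_Lp_norm_add_smul_rpow hp _ _)
  exact apply_eq_of_hasDerivAt_norm_rpow hp.le (norm_normingVector hf) (apply_normingVector _) hd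

theorem tendsto_norm_eigenResidual_inverseIterate [FiniteDimensional ℝ E] (hp : 1 < p)
    (hY : ∀ y : Y, ‖y‖ ^ p = ‖T y‖ ^ p + ‖G y‖ ^ p) (hβ : 0 < β) (hTy : ∀ i, ‖T (y i)‖ = 1)
    (hy : Tendsto (fun i => ‖y i‖) l (𝓝 β))
    (hβ_le : ∀ i, β ≤ ‖T (inverseIterate hp T (T (y i)))‖⁻¹) :
    Tendsto (fun i => ‖eigenResidual hp T G (β ^ p - 1) (inverseIterate hp T (T (y i)))‖) l
      (𝓝 0) := by
  set L := fun i => pullbackDuality hp T (T (y i))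
  set D := fun i => pullbackDuality hp T (T (inverseIterate hp T (T (y i))))
  have hL0 (i) : L i ≠ 0 := pullbackDuality_ne_zero hp (hTy i)
  have hL : Tendsto (fun i => ‖L i‖⁻¹) l (𝓝 β) := by
    simpa using (tendsto_norm_pullbackDuality hp hβ hTy hy hβ_le).inv₀ (inv_ne_zero hβ.ne')
  have hLD : Tendsto (fun i => L i - β ^ (p - 1) • D i) l (𝓝 0) :=
    tendsto_pullbackDuality_sub_smul hp hβ hTy hy hβ_le
  have hD : IsBoundedUnder (· ≤ ·) l fun i => ‖D i‖ := by
    refine isBoundedUnder_of ⟨‖T‖ ^ (p - 1) * ‖T‖, fun i => (norm_pullbackDuality_le hp _).trans ?_⟩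
    have hTv := T.le_opNorm_of_le (norm_normingVector_le_one (pullbackDuality hp T (T (y i))))
    rw [mul_one] at hTv
    gcongr
    exact hTv
  have hres (i) : eigenResidual hp T G (β ^ p - 1) (inverseIterate hp T (T (y i))) =
      ‖L i‖⁻¹ • (L i - β ^ (p - 1) • D i) + ((‖L i‖⁻¹ - β) * β ^ (p - 1)) • D i := by
    have hEuler := (inv_smul_eq_iff₀ (norm_ne_zero_iff.2 (hL0 i))).2
      (pullbackDuality_eq_smul_add hp hY (hL0 i))
    have hpow : β ^ p = β * β ^ (p - 1) := by
      rw [← Real.rpow_one_add' hβ.le (by linarith), add_sub_cancel]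
    rw [smul_sub, hEuler, hpow, eigenResidual]
    module
  simp only [← tendsto_zero_iff_norm_tendsto_zero, hres]
  have hLβ : Tendsto (fun i => (‖L i‖⁻¹ - β) * β ^ (p - 1)) l (𝓝 0) := by
    simpa using (tendsto_sub_nhds_zero_iff.2 hL).mul_const (β ^ (p - 1))
  simpa using (hL.smul hLD).add (hLβ.zero_smul_isBoundedUnder_le hD)

theorem exists_eigenResidual_eq_zero_of_tendsto [FiniteDimensional ℝ E] [FiniteDimensional ℝ F]
    [l.NeBot] (hp : 1 < p) (hY : ∀ y : Y, ‖y‖ ^ p = ‖T y‖ ^ p + ‖G y‖ ^ p) (hβ : 0 < β)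
    (hTy : ∀ i, ‖T (y i)‖ = 1) (hy : Tendsto (fun i => ‖y i‖) l (𝓝 β))
    (hβ_le : ∀ i, β ≤ ‖T (inverseIterate hp T (T (y i)))‖⁻¹) {f : Lp E (ENNReal.ofReal p) μ}
    (hf : Tendsto (fun i => T (inverseIterate hp T (T (y i)))) l (𝓝 f)) :
    ∃ v : Y, v ≠ 0 ∧ eigenResidual hp T G (β ^ p - 1) v = 0 := by
  have hTy_lim : Tendsto (fun i => T (y i)) l (𝓝 (β • f)) := by
    have hsub := ((T.continuous.tendsto 0).comp
      (tendsto_sub_smul_inverseIterate hp hβ hTy hy hβ_le)).add (hf.const_smul β)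
    simpa [Function.comp_def] using hsub
  have hL0 : pullbackDuality hp T (β • f) ≠ 0 := by
    have hL := ((continuous_pullbackDuality hp (T := T)).norm.tendsto (β • f)).comp hTy_lim
    have hnorm := tendsto_nhds_unique hL (tendsto_norm_pullbackDuality hp hβ hTy hy hβ_le)
    exact norm_ne_zero_iff.1 (hnorm ▸ inv_ne_zero hβ.ne')
  have hv : Tendsto (fun i => inverseIterate hp T (T (y i))) l (𝓝 (inverseIterate hp T (β • f))) :=
    (continuousAt_inverseIterate hp hL0).tendsto.comp hTy_lim
  refine ⟨inverseIterate hp T (β • f), ?_, tendsto_nhds_unique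
    (((continuous_eigenResidual hp (β ^ p - 1)).tendsto _).comp hv)
    (tendsto_zero_iff_norm_tendsto_zero.2
      (tendsto_norm_eigenResidual_inverseIterate hp hY hβ hTy hy hβ_le))⟩
  exact norm_ne_zero_iff.1 ((norm_normingVector hL0).trans_ne one_ne_zero)

end InverseIteration

section EulerLagrange

variable {N : ℕ} {p : ℝ} [Fact (1 ≤ ENNReal.ofReal p)] {Ω : Set (EucN N)} {c : ℝ}

namespace Sobolev10

theorem isEigenfunction_of_eigenResidual_eq_zero (hp : 1 < p) {v : Sobolev10 N p Ω} (hv : v ≠ 0)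
    (h : eigenResidual hp (toLp Ω) (grad Ω) c v = 0) : IsEigenfunction N p hp.le Ω c v.1.ofLp := by
  refine ⟨v.2, fun h0 => hv (Subtype.ext (WithLp.ofLp_injective _ h0)), fun φ hφ => ?_⟩
  have hφp := hφ.memLp (ENNReal.ofReal p)
  have hφp' := hφ.memLp_gradient (ENNReal.ofReal p)
  let w : Sobolev10 N p Ω := ⟨WithLp.toLp _ (hφp.toLp φ, hφp'.toLp _),
    subset_closure ⟨φ, hφ, hφp.coeFn_toLp, hφp'.coeFn_toLp⟩⟩
  have hw : LpDuality hp (grad Ω v) (grad Ω w) = c * LpDuality hp (toLp Ω v) (toLp Ω w) :=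
    sub_eq_zero.1 (DFunLike.congr_fun h w)
  rw [LpDuality_apply, LpDuality_apply] at hw
  convert hw using 1
  · refine integral_congr_ae (hφp'.coeFn_toLp.mono fun x hx => ?_)
    simp only [inner_dualityMap_left, ← hx]
    rfl
  · congr 1
    refine integral_congr_ae (hφp.coeFn_toLp.mono fun x hx => ?_)
    simp only [inner_dualityMap_left, ← hx, mul_assoc]
    rw [real_inner_comm]
    rfl

theorem isEigenvalue_of_tendsto_norm [UniformConvexSpace (Sobolev10 N p Ω)] (hp : 1 < p)
    {lam R₀ β : ℝ} (hc : c < lam)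
    (hlam : ENNReal.ofReal lam ≤ lambda1p N p hp.le (Ω \ closure (ball 0 R₀))) (hβ : 0 < β)
    (hβp : β ^ p = c + 1) {y : ℕ → Sobolev10 N p Ω} (hTy : ∀ n, ‖toLp Ω (y n)‖ = 1)
    (hy : Tendsto (fun n => ‖y n‖) atTop (𝓝 β))
    (hβ_le : ∀ n, β ≤ ‖toLp Ω (inverseIterate hp (toLp Ω) (toLp Ω (y n)))‖⁻¹) :
    IsEigenvalue N p hp.le Ω c := by
  obtain rfl : c = β ^ p - 1 := eq_sub_of_add_eq hβp.symm
  have hY := norm_rpow (Ω := Ω) (zero_lt_one.trans hp)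
  have hyU := hy.mono_left Nat.hyperfilter_le_atTop
  obtain ⟨f, hf⟩ := exists_tendsto_toLp_of_eigenResidual hp hc hlam (hyperfilter ℕ)
    (fun n => norm_normingVector_le_one _)
    (tendsto_norm_eigenResidual_inverseIterate hp hY hβ hTy hyU hβ_le)
  obtain ⟨v, hv, hres⟩ := exists_eigenResidual_eq_zero_of_tendsto hp hY hβ hTy hyU hβ_le hf
  exact ⟨v.1.ofLp, isEigenfunction_of_eigenResidual_eq_zero hp hv hres⟩

end Sobolev10

end EulerLagrange

section Minmax

theorem genusGE.image {X Z : Type*} [NormedAddCommGroup X] [NormedAddCommGroup Z] {A : Set X}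
    {k : ℕ} (hA : genusGE A k) {f : X → Z} (hf : ContinuousOn f A)
    (hodd : ∀ x ∈ A, f (-x) = -f x) : genusGE (f '' A) k := by
  rintro j ⟨g, hg, hg1, hg_odd⟩
  refine hA j ⟨g ∘ f, hg.comp hf (mapsTo_image f A), fun x hx => hg1 _ (mem_image_of_mem f hx),
    fun x hx => ?_⟩
  rw [Function.comp_apply, hodd x hx, hg_odd _ (mem_image_of_mem f hx), Function.comp_apply]

theorem genusGE.nonempty {X : Type*} [NormedAddCommGroup X] {A : Set X} {k : ℕ}
    (hA : genusGE A k) (hk : 1 ≤ k) : A.Nonempty := by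
  rw [nonempty_iff_ne_empty]
  rintro rfl
  exact absurd (hA 0 ⟨0, by simp⟩) (by lia)

theorem integral_abs_rpow_eq_one_iff {α : Type*} [MeasurableSpace α] {μ : Measure α} {p : ℝ}
    [Fact (1 ≤ ENNReal.ofReal p)] (hp : 0 < p) {f : Lp ℝ (ENNReal.ofReal p) μ} :
    ∫ x, |f x| ^ p ∂μ = 1 ↔ ‖f‖ = 1 :=
  (Eq.congr_left (Lp_norm_rpow_eq_integral hp f).symm).trans
    (by rw [← Real.rpow_left_inj (norm_nonneg f) zero_le_one hp.ne', Real.one_rpow])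

variable {N : ℕ} {p : ℝ} {Ω : Set (EucN N)}

theorem lambdaLS_mono (hp : 1 ≤ p) : Monotone (lambdaLS N p hp Ω) := fun _ _ h =>
  le_iInf₂ fun K hK => iInf₂_le K
    ⟨hK.1, hK.2.1, hK.2.2.1, hK.2.2.2.1, fun j hj => h.trans (hK.2.2.2.2 j hj)⟩

variable [Fact (1 ≤ ENNReal.ofReal p)] {ℓ : ℕ} {K : Set (SobPair N (ENNReal.ofReal p))}

namespace Sobolev10

theorem image_mem_SobClass (hp : 1 < p) (hK : K ∈ SobClass N p hp.le Ω ℓ)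
    {Φ : SobPair N (ENNReal.ofReal p) → Sobolev10 N p Ω} (hΦ : ContinuousOn Φ K)
    (hodd : ∀ w ∈ K, Φ (-w) = -Φ w) (hnorm : ∀ w ∈ K, ‖toLp Ω (Φ w)‖ = 1) :
    (fun w => (Φ w).1.ofLp) '' K ∈ SobClass N p hp.le Ω ℓ := by
  have hcont : ContinuousOn (fun w => (Φ w).1.ofLp) K :=
    (WithLp.prod_continuous_ofLp _ _ _).comp_continuousOn
      (continuous_subtype_val.comp_continuousOn hΦ)
  have hneg (w) (hw : w ∈ K) : (Φ (-w)).1.ofLp = -(Φ w).1.ofLp := by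
    rw [hodd w hw]
    rfl
  refine ⟨?_, ?_, ?_, hK.2.2.2.1.image_of_continuousOn hcont, hK.2.2.2.2.image hcont hneg⟩
  · rintro _ ⟨w, -, rfl⟩
    exact (Φ w).2
  · rintro _ ⟨w, hw, rfl⟩
    exact (integral_abs_rpow_eq_one_iff (by linarith)).2 (hnorm w hw)
  · rintro _ ⟨w, hw, rfl⟩
    exact ⟨-w, hK.2.2.1 w hw, hneg w hw⟩

theorem exists_lambdaLS_add_one_le (hp : 1 < p) (hℓ : 1 ≤ ℓ) (hK : K ∈ SobClass N p hp.le Ω ℓ)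
    {Φ : SobPair N (ENNReal.ofReal p) → Sobolev10 N p Ω} (hΦ : ContinuousOn Φ K)
    (hodd : ∀ w ∈ K, Φ (-w) = -Φ w) (hnorm : ∀ w ∈ K, ‖toLp Ω (Φ w)‖ = 1) :
    ∃ w ∈ K, (lambdaLS N p hp.le Ω ℓ).toReal + 1 ≤ ‖Φ w‖ ^ p := by
  have hp0 : 0 < p := by linarith
  obtain ⟨w, hw, hmax⟩ :=
    hK.2.2.2.1.exists_isMaxOn (hK.2.2.2.2.nonempty hℓ) hΦ.norm
  have hgrad (z) (hz : z ∈ K) : ‖grad Ω (Φ z)‖ ^ p = ‖Φ z‖ ^ p - 1 := by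
    rw [norm_rpow hp0, hnorm z hz, Real.one_rpow, add_sub_cancel_left]
  refine ⟨w, hw, le_sub_iff_add_le.1 (ENNReal.toReal_le_of_le_ofReal ?_ ?_)⟩
  · rw [← hgrad w hw]
    positivity
  refine (iInf₂_le _ (image_mem_SobClass hp hK hΦ hodd hnorm)).trans (iSup₂_le ?_)
  rintro _ ⟨z, hz, rfl⟩
  refine ENNReal.ofReal_le_ofReal ?_
  calc ∫ x, ‖(Φ z).1.ofLp.2 x‖ ^ p = ‖Φ z‖ ^ p - 1 :=
        (Lp_norm_rpow_eq_integral hp0 (grad Ω (Φ z))).symm.trans (hgrad z hz)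
    _ ≤ ‖Φ w‖ ^ p - 1 := by gcongr; exact hmax hz

theorem exists_mem_SobClass_norm_rpow_le (hp : 1 < p) (hfin : lambdaLS N p hp.le Ω ℓ ≠ ∞) {e : ℝ}
    (he : 0 < e) : ∃ K ∈ SobClass N p hp.le Ω ℓ, ∀ y : Sobolev10 N p Ω, y.1.ofLp ∈ K →
      ‖toLp Ω y‖ = 1 ∧ ‖y‖ ^ p ≤ (lambdaLS N p hp.le Ω ℓ).toReal + 1 + e := by
  have hp0 : 0 < p := by linarith
  have hlt := ENNReal.lt_add_right hfin (ENNReal.ofReal_pos.2 he).ne'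
  nth_rw 1 [lambdaLS] at hlt
  simp only [iInf_lt_iff] at hlt
  obtain ⟨K, hK, hlt⟩ := hlt
  refine ⟨K, hK, fun y hy => ?_⟩
  have hnorm : ‖toLp Ω y‖ = 1 := (integral_abs_rpow_eq_one_iff hp0).1 (hK.2.1 _ hy)
  have hgrad : ENNReal.ofReal (‖grad Ω y‖ ^ p) ≤
      ENNReal.ofReal ((lambdaLS N p hp.le Ω ℓ).toReal + e) := by
    rw [ENNReal.ofReal_add toReal_nonneg he.le, ofReal_toReal hfin, Lp_norm_rpow_eq_integral hp0]
    exact (le_iSup₂ (f := fun w (_ : w ∈ K) => ENNReal.ofReal (∫ x, ‖w.2 x‖ ^ p)) _ hy).trans hlt.le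
  rw [ENNReal.ofReal_le_ofReal_iff (by positivity)] at hgrad
  rw [norm_rpow hp0, hnorm, Real.one_rpow]
  exact ⟨rfl, by linarith⟩

variable [UniformConvexSpace (Sobolev10 N p Ω)]

theorem exists_norm_rpow_le_and_le_inverseIterate (hp : 1 < p) (hℓ : 1 ≤ ℓ)
    (hfin : lambdaLS N p hp.le Ω ℓ ≠ ∞) {e : ℝ} (he : 0 < e) :
    ∃ y : Sobolev10 N p Ω, ‖toLp Ω y‖ = 1 ∧
      ‖y‖ ^ p ≤ (lambdaLS N p hp.le Ω ℓ).toReal + 1 + e ∧ (lambdaLS N p hp.le Ω ℓ).toReal + 1 ≤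
        ‖toLp Ω (inverseIterate hp (toLp Ω) (toLp Ω y))‖⁻¹ ^ p := by
  obtain ⟨K, hK, hle⟩ := exists_mem_SobClass_norm_rpow_le hp hfin he
  have hlift (w) (hw : w ∈ K) : ∃ y : Sobolev10 N p Ω, y.1.ofLp = w ∧ ‖toLp Ω y‖ = 1 :=
    ⟨⟨WithLp.toLp _ w, hK.1 hw⟩, rfl, (hle _ hw).1⟩
  have hcont : ContinuousOn (fun w => normalizedInverseIterate hp (toLp Ω) w.1) K := fun w hw => by
    obtain ⟨y, rfl, hy⟩ := hlift w hw
    exact ((continuousAt_normalizedInverseIterate hp hy).comp_of_eq continuousAt_fst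
      rfl).continuousWithinAt
  obtain ⟨_, hw, hwle⟩ := exists_lambdaLS_add_one_le hp hℓ hK hcont
    (fun w hw => by
      obtain ⟨y, rfl, hy⟩ := hlift w hw
      exact normalizedInverseIterate_neg hp (pullbackDuality_ne_zero hp hy))
    (fun w hw => by
      obtain ⟨y, rfl, hy⟩ := hlift w hw
      exact norm_apply_normalizedInverseIterate hp hy)
  obtain ⟨y, rfl, hy⟩ := hlift _ hw
  exact ⟨y, hy, (hle y hw).2, hwle.trans_eq (congrArg (· ^ p)
    (norm_normalizedInverseIterate hp (pullbackDuality_ne_zero hp hy)))⟩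

theorem exists_seq_tendsto_norm_and_le_inverseIterate (hp : 1 < p) (hℓ : 1 ≤ ℓ)
    (hfin : lambdaLS N p hp.le Ω ℓ ≠ ∞) {β : ℝ} (hβ : 0 ≤ β)
    (hβp : β ^ p = (lambdaLS N p hp.le Ω ℓ).toReal + 1) :
    ∃ y : ℕ → Sobolev10 N p Ω, (∀ n, ‖toLp Ω (y n)‖ = 1) ∧
      Tendsto (fun n => ‖y n‖) atTop (𝓝 β) ∧
      ∀ n, β ≤ ‖toLp Ω (inverseIterate hp (toLp Ω) (toLp Ω (y n)))‖⁻¹ := by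
  have hp0 : 0 < p := by linarith
  choose y hTy hle hβ_le using fun n : ℕ => exists_norm_rpow_le_and_le_inverseIterate (Ω := Ω) hp
    hℓ hfin (Nat.one_div_pos_of_nat (α := ℝ) (n := n))
  simp only [← hβp, Real.rpow_le_rpow_iff hβ (inv_nonneg.2 (norm_nonneg _)) hp0] at hle hβ_le
  have hlim : Tendsto (fun n : ℕ => (β ^ p + 1 / ((n : ℝ) + 1)) ^ p⁻¹) atTop (𝓝 β) := by
    have h := (tendsto_one_div_add_atTop_nhds_zero_nat (𝕜 := ℝ)).const_add (β ^ p)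
    simpa [Real.rpow_rpow_inv hβ hp0.ne'] using h.rpow_const (p := p⁻¹) (.inr (by positivity))
  refine ⟨y, hTy, tendsto_of_tendsto_of_tendsto_of_le_of_le tendsto_const_nhds hlim
    (fun n => (hβ_le n).trans (inv_norm_apply_inverseIterate_le hp (hTy n))) fun n => ?_, hβ_le⟩
  exact (Real.le_rpow_inv_iff_of_pos (norm_nonneg _) (by positivity) hp0).2 (hle n)

end Sobolev10

end Minmax

theorem statement0_general (N : ℕ) (p : ℝ) (hp1 : 1 < p) (Ω : Set (EucN N)) {ℓ : ℕ} (hℓ : 1 ≤ ℓ)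
    (hlt : lambdaLS N p hp1.le Ω ℓ < Einfty N p hp1.le Ω) :
    IsEigenvalue N p hp1.le Ω (lambdaLS N p hp1.le Ω ℓ).toReal := by
  have := fact_one_le_ofReal hp1.le
  have := Sobolev10.uniformConvexSpace (N := N) (Ω := Ω) hp1
  have hfin : lambdaLS N p hp1.le Ω ℓ ≠ ∞ := (hlt.trans_le le_top).ne
  simp only [Einfty, lt_iSup_iff] at hlt
  obtain ⟨R₀, -, hlt⟩ := hlt
  obtain ⟨lam, -, hlt, hlam⟩ := ENNReal.lt_iff_exists_real_btwn.1 hlt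
  set c := (lambdaLS N p hp1.le Ω ℓ).toReal
  have : 0 ≤ c := ENNReal.toReal_nonneg
  set β := (c + 1) ^ p⁻¹
  have hβ : 0 < β := by positivity
  have hβp : β ^ p = c + 1 := Real.rpow_inv_rpow (by positivity) (by positivity)
  have hc : c < lam := (ENNReal.lt_ofReal_iff_toReal_lt hfin).1 hlt
  obtain ⟨y, hTy, hy, hβ_le⟩ :=
    Sobolev10.exists_seq_tendsto_norm_and_le_inverseIterate (Ω := Ω) hp1 hℓ hfin hβ.le hβp
  exact Sobolev10.isEigenvalue_of_tendsto_norm hp1 hc hlam.le hβ hβp hTy hy hβ_le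

theorem statement0 (N : ℕ) (p : ℝ) (hp1 : 1 < p) (Ω : Set (EucN N)) (hΩ : IsOpen Ω)
    (k : ℕ) (hk : k ≠ 0) (hlt : lambdaLS N p hp1.le Ω k < Einfty N p hp1.le Ω) :
    ∀ ℓ : ℕ, 1 ≤ ℓ → ℓ ≤ k →
      IsEigenvalue N p hp1.le Ω ((lambdaLS N p hp1.le Ω ℓ).toReal) :=
  fun _ hℓ hℓk => statement0_general N p hp1 Ω hℓ ((lambdaLS_mono hp1.le hℓk).trans_lt hlt)

end
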